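/- arXiv:1801.02182 — 2 statements merged into one kernel-verified Lean document; each statement's English description precedes it below -/
import Mathlib

section
/- ∫₀^∞ I₀(t)[K₀(t)]⁵ t³ dt = (π²/3)·∫₀^∞ I₀(t)K₀(t)·( [I₀(t)]²[K₀(t)]² − 1/(4t²) )·t³ dt. -/
open Real MeasureTheory Set

/-- Modified Bessel function `I₀(t) = (1/π)∫₀^π exp(t cos θ) dθ`. -/
noncomputable def I0 (t : ℝ) : ℝ := (1 / π) * ∫ θ in (0:ℝ)..π, exp (t * cos θ)

/-- Modified Bessel function `K₀(t) = ∫₀^∞ exp(−t cosh u) du`. -/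
noncomputable def K0 (t : ℝ) : ℝ := ∫ u in Ioi (0:ℝ), exp (-(t * Real.cosh u))

/-- Rising factorial `(a)ₙ = a(a+1)⋯(a+n−1)`. -/
noncomputable def ris (a : ℝ) (n : ℕ) : ℝ := ∏ k ∈ Finset.range n, (a + k)

/-- Generalized hypergeometric series `ₚF_q(a; b | x)`. -/
noncomputable def pFq (a b : List ℝ) (x : ℝ) : ℝ :=
  ∑' n : ℕ, ((a.map fun p => ris p n).prod / (b.map fun q => ris q n).prod) * x ^ n
    / (n.factorial : ℝ)


noncomputable def csq (w : ℂ) : ℂ := w ^ (1/2 : ℂ)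

lemma csq_sq (w : ℂ) : csq w ^ 2 = w := by
  unfold csq
  rw [← Complex.cpow_nat_mul]; norm_num

lemma norm_csq (w : ℂ) : ‖csq w‖ = √‖w‖ := by
  have h : ‖csq w‖ ^ 2 = ‖w‖ := by rw [← norm_pow, csq_sq]
  rw [← h, Real.sqrt_sq (norm_nonneg _)]

lemma csq_re_nonneg (w : ℂ) : 0 ≤ (csq w).re := by
  unfold csq
  by_cases hw : w = 0
  · subst hw
    rw [Complex.zero_cpow (by norm_num)]; simp
  rw [Complex.cpow_def_of_ne_zero hw, Complex.exp_re]
  apply mul_nonneg (Real.exp_pos _).le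
  apply Real.cos_nonneg_of_mem_Icc
  have : (Complex.log w * (1/2)).im = w.arg / 2 := by
    rw [show (1/2 : ℂ) = ((1/2 : ℝ) : ℂ) by norm_num, Complex.im_mul_ofReal, Complex.log_im]; ring
  rw [this]
  have h1 := Complex.neg_pi_lt_arg w
  have h2 := Complex.arg_le_pi w
  constructor <;> linarith

lemma key_ineq (w : ℂ) (hw : 1 + w ≠ 0) :
    ‖(csq (1 + w))⁻¹ - (1 - w / 2)‖ ≤ ‖w‖ ^ 2 * ‖(csq (1 + w))⁻¹‖ := by
  set s := csq (1 + w) with hs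
  have hsw : w = s ^ 2 - 1 := by rw [hs, csq_sq]; ring
  have hre : 0 ≤ s.re := csq_re_nonneg _
  have hs0 : s ≠ 0 := by
    intro h; apply hw; rw [← csq_sq (1 + w), ← hs, h]; simp
  have h1 : s⁻¹ - (1 - w / 2) = (s - 1) ^ 2 * (s + 2) / 2 * s⁻¹ := by
    rw [hsw]; field_simp; ring
  have hw2 : ‖w‖ ^ 2 = ‖s - 1‖ ^ 2 * ‖s + 1‖ ^ 2 := by
    rw [hsw, ← mul_pow, ← norm_mul]; ring_nf
  rw [h1, hw2, norm_mul]
  apply mul_le_mul_of_nonneg_right _ (norm_nonneg _)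
  rw [norm_div, norm_mul, norm_pow, mul_div_assoc]
  apply mul_le_mul_of_nonneg_left _ (by positivity)
  have ha : 1 ≤ ‖s + 1‖ := by
    have := Complex.re_le_norm (s + 1)
    simp at this; linarith
  have hb : ‖s + 2‖ ≤ ‖s + 1‖ + 1 := by
    have := norm_add_le (s + 1) 1
    rw [show s + 1 + 1 = s + 2 by ring] at this; simpa using this
  simp only [Complex.norm_ofNat]
  nlinarith

noncomputable def gs (x : ℝ) : ℝ := (Icc (-1:ℝ) 1).indicator (fun x => 1 / √|x|) x

lemma gs_nonneg (x : ℝ) : 0 ≤ gs x := by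
  unfold gs
  apply indicator_nonneg; intro x _; positivity

lemma gs_integrable : Integrable gs := by
  unfold gs
  rw [integrable_indicator_iff measurableSet_Icc]
  have h : IntervalIntegrable (fun x : ℝ => 1 / √|x|) volume 0 1 := by
    have := intervalIntegral.intervalIntegrable_rpow' (a := 0) (b := 1) (r := -1/2) (by norm_num)
    refine this.congr ?_
    intro x hx
    rw [uIoc_of_le zero_le_one] at hx
    simp only
    rw [abs_of_pos hx.1, Real.sqrt_eq_rpow, one_div, ← Real.rpow_neg hx.1.le]; norm_num
  have h' : IntervalIntegrable (fun x : ℝ => 1 / √|x|) volume (-1) 0 := by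
    have := h.comp_sub_left 0
    simp at this
    simpa using this.symm
  have h2 := h'.trans h
  rwa [intervalIntegrable_iff_integrableOn_Icc_of_le (by norm_num)] at h2

lemma gs_bound (x : ℝ) : 1 / √|x| ≤ 1 + gs x := by
  unfold gs
  by_cases hx : x ∈ Icc (-1:ℝ) 1
  · rw [indicator_of_mem hx]; linarith
  · rw [indicator_of_notMem hx]
    have : 1 < |x| := by
      by_contra! h
      exact hx (abs_le.mp h)
    rw [add_zero, div_le_one (by positivity)]
    rw [Real.one_le_sqrt]; exact this.le

lemma wt (p : ℝ → ℝ) (B : ℝ) (hp : IntegrableOn p (Ioi 0)) 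
    (h0 : ∀ r ∈ Ioi (0:ℝ), 0 ≤ p r) (hB : ∀ r ∈ Ioi (0:ℝ), p r ≤ B) (c : ℝ) :
    IntegrableOn (fun r => p r * (1 / √|c - r|)) (Ioi 0) ∧
    ∫ r in Ioi (0:ℝ), p r * (1 / √|c - r|) ≤ (∫ r in Ioi (0:ℝ), p r) + B * ∫ x, gs x := by
  have hB0 : 0 ≤ B := (h0 1 (by simp)).trans (hB 1 (by simp))
  have hg : Integrable (fun r => gs (c - r)) := gs_integrable.comp_sub_left c
  have hgi : IntegrableOn (fun r => p r + B * gs (c - r)) (Ioi 0) :=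
    hp.add (hg.const_mul B).integrableOn
  have hle : ∀ r ∈ Ioi (0:ℝ), p r * (1 / √|c - r|) ≤ p r + B * gs (c - r) := by
    intro r hr
    have h1 := mul_le_mul_of_nonneg_left (gs_bound (c - r)) (h0 r hr)
    have h2 := mul_le_mul_of_nonneg_right (hB r hr) (gs_nonneg (c - r))
    linarith
  have hi : IntegrableOn (fun r => p r * (1 / √|c - r|)) (Ioi 0) := by
    refine Integrable.mono' hgi ?_ ?_
    · exact hp.aestronglyMeasurable.mul (by fun_prop : Measurable fun r : ℝ => 1 / √|c - r|).aestronglyMeasurable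
    · filter_upwards [ae_restrict_mem measurableSet_Ioi] with r hr
      rw [Real.norm_of_nonneg (mul_nonneg (h0 r hr) (by positivity))]
      exact hle r hr
  refine ⟨hi, ?_⟩
  calc _ ≤ ∫ r in Ioi (0:ℝ), (p r + B * gs (c - r)) :=
        setIntegral_mono_on hi hgi measurableSet_Ioi hle
    _ = (∫ r in Ioi (0:ℝ), p r) + B * ∫ r in Ioi (0:ℝ), gs (c - r) := by
        rw [integral_add hp (hg.const_mul B).integrableOn, integral_const_mul]
    _ ≤ _ := by
        gcongr
        calc _ ≤ ∫ r, gs (c - r) := setIntegral_le_integral hg (Filter.Eventually.of_forall fun r => gs_nonneg _)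
          _ = _ := integral_sub_left_eq_self gs volume c

noncomputable def kern (r : ℝ) (w : ℂ) : ℂ :=
  ((rexp (-r) * (1 / √r) : ℝ) : ℂ) * (csq (1 + r / (2 * w)))⁻¹

noncomputable def hh (w : ℂ) : ℂ := ∫ r in Ioi (0:ℝ), kern r w

lemma measurable_csq : Measurable csq := by unfold csq; fun_prop

lemma measurable_kern (w : ℂ) : Measurable (fun r => kern r w) := by
  unfold kern
  have := measurable_csq
  fun_prop

lemma ker_bd (r : ℝ) (hr : 0 < r) (w : ℂ) (hw : w ≠ 0) (hne : r ≠ 2 * ‖w‖) :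
    1 + (r:ℂ) / (2 * w) ≠ 0 ∧
    ‖(csq (1 + r / (2 * w)))⁻¹‖ ≤ 1 + √r * (1 / √|2 * ‖w‖ - r|) := by
  have hw' : 0 < ‖w‖ := norm_pos_iff.mpr hw
  have hd : 0 < |2 * ‖w‖ - r| := abs_pos.mpr (fun h => hne (by linarith))
  have h1 : 1 + (r:ℂ) / (2 * w) = (2 * w + r) / (2 * w) := by field_simp
  have h2 : ‖1 + (r:ℂ) / (2 * w)‖ = ‖2 * w + r‖ / (2 * ‖w‖) := by
    rw [h1, norm_div, norm_mul]; simp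
  have h3 : |2 * ‖w‖ - r| ≤ ‖2 * w + r‖ := by
    have := abs_norm_sub_norm_le (2 * w) (-(r:ℂ))
    simpa [abs_of_pos hr] using this
  have h4 : 0 < ‖1 + (r:ℂ) / (2 * w)‖ := by rw [h2]; exact div_pos (hd.trans_le h3) (by positivity)
  refine ⟨norm_pos_iff.mp h4, ?_⟩
  rw [norm_inv, norm_csq, h2, Real.sqrt_div (norm_nonneg _), inv_div]
  calc √(2 * ‖w‖) / √‖2 * w + r‖ ≤ √(2 * ‖w‖) / √|2 * ‖w‖ - r| := by gcongr
    _ ≤ (√|2 * ‖w‖ - r| + √r) / √|2 * ‖w‖ - r| := by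
      gcongr
      rw [Real.sqrt_le_left (by positivity)]
      have e1 := Real.sq_sqrt hd.le
      have e2 := Real.sq_sqrt hr.le
      have e3 := le_abs_self (2 * ‖w‖ - r)
      nlinarith [mul_nonneg (Real.sqrt_nonneg |2 * ‖w‖ - r|) (Real.sqrt_nonneg r)]
    _ = _ := by
      have : √|2 * ‖w‖ - r| ≠ 0 := (Real.sqrt_pos.mpr hd).ne'
      field_simp

lemma int_gam (a : ℝ) (ha : -1 < a) : IntegrableOn (fun r => rexp (-r) * r ^ a) (Ioi 0) := by
  have := Real.GammaIntegral_convergent (s := a + 1) (by linarith)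
  simpa using this

lemma int_e : IntegrableOn (fun r => rexp (-r)) (Ioi 0) := by
  simpa using int_gam 0 (by norm_num)

lemma inv_sqrt_eq (r : ℝ) (hr : 0 < r) : 1 / √r = r ^ (-1/2 : ℝ) := by
  rw [Real.sqrt_eq_rpow, one_div, ← Real.rpow_neg hr.le]; norm_num

lemma int_es : IntegrableOn (fun r => rexp (-r) * (1 / √r)) (Ioi 0) := by
  refine (int_gam (-1/2) (by norm_num)).congr_fun ?_ measurableSet_Ioi
  intro r hr
  simp only
  rw [inv_sqrt_eq r hr]

lemma val_es : ∫ r in Ioi (0:ℝ), rexp (-r) * (1 / √r) = √π := by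
  rw [← Real.Gamma_one_half_eq, Real.Gamma_eq_integral (by norm_num)]
  refine setIntegral_congr_fun measurableSet_Ioi ?_
  intro r hr
  simp only
  rw [inv_sqrt_eq r hr]; norm_num

lemma int_es1 : IntegrableOn (fun r => rexp (-r) * (1 / √r) * r) (Ioi 0) := by
  refine (int_gam (1/2) (by norm_num)).congr_fun ?_ measurableSet_Ioi
  intro r hr
  simp only
  rw [inv_sqrt_eq r hr, mul_assoc, ← Real.rpow_add_one (ne_of_gt hr)]; norm_num

lemma val_es1 : ∫ r in Ioi (0:ℝ), rexp (-r) * (1 / √r) * r = √π / 2 := by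
  have : Real.Gamma (1/2 + 1) = √π / 2 := by
    rw [Real.Gamma_add_one (by norm_num), Real.Gamma_one_half_eq]; ring
  rw [← this, Real.Gamma_eq_integral (by norm_num)]
  refine setIntegral_congr_fun measurableSet_Ioi ?_
  intro r hr
  have hr' : r ≠ 0 := ne_of_gt hr
  simp only
  rw [inv_sqrt_eq r hr, mul_assoc, ← Real.rpow_add_one hr']; norm_num

lemma int_es2 : IntegrableOn (fun r => rexp (-r) * (1 / √r) * r ^ 2) (Ioi 0) := by
  refine (int_gam (3/2) (by norm_num)).congr_fun ?_ measurableSet_Ioi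
  intro r hr
  have hr' : r ≠ 0 := ne_of_gt hr
  simp only
  rw [inv_sqrt_eq r hr, mul_assoc, ← Real.rpow_natCast, ← Real.rpow_add hr]; norm_num

lemma int_e2 : IntegrableOn (fun r => rexp (-r) * r ^ 2) (Ioi 0) := by
  simpa using int_gam 2 (by norm_num)

lemma ae_ne (c : ℝ) : ∀ᵐ r ∂(volume.restrict (Ioi (0:ℝ))), r ≠ c := by
  apply ae_restrict_of_ae
  exact Measure.ae_ne volume c

lemma kern_bd (w : ℂ) (hw : w ≠ 0) : ∀ᵐ r ∂(volume.restrict (Ioi (0:ℝ))),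
    ‖kern r w‖ ≤ rexp (-r) * (1 / √r) + rexp (-r) * (1 / √|2 * ‖w‖ - r|) := by
  filter_upwards [ae_ne (2 * ‖w‖), ae_restrict_mem measurableSet_Ioi] with r hne hr
  have hr : 0 < r := hr
  unfold kern
  rw [norm_mul, Complex.norm_real, Real.norm_of_nonneg (by positivity)]
  refine (mul_le_mul_of_nonneg_left (ker_bd r hr w hw hne).2 (by positivity)).trans (le_of_eq ?_)
  have : √r ≠ 0 := (Real.sqrt_pos.mpr hr).ne'
  field_simp

lemma int_e_shift (c : ℝ) : IntegrableOn (fun r => rexp (-r) * (1 / √|c - r|)) (Ioi 0) ∧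
    ∫ r in Ioi (0:ℝ), rexp (-r) * (1 / √|c - r|) ≤ (∫ r in Ioi (0:ℝ), rexp (-r)) + 1 * ∫ x, gs x := wt (fun r => rexp (-r)) 1 int_e (fun r _ => (Real.exp_pos _).le)
  (fun r hr => Real.exp_le_one_iff.mpr (by have : 0 < r := hr; linarith)) c

lemma int_e2_shift (c : ℝ) : IntegrableOn (fun r => rexp (-r) * r ^ 2 * (1 / √|c - r|)) (Ioi 0) ∧
    ∫ r in Ioi (0:ℝ), rexp (-r) * r ^ 2 * (1 / √|c - r|) ≤ (∫ r in Ioi (0:ℝ), rexp (-r) * r ^ 2) + 2 * ∫ x, gs x := wt (fun r => rexp (-r) * r ^ 2) 2 int_e2 (fun r _ => by positivity)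
  (fun r hr => by
    have hr : 0 < r := hr
    have := Real.quadratic_le_exp_of_nonneg hr.le
    rw [Real.exp_neg, inv_mul_le_iff₀ (Real.exp_pos _)]
    nlinarith) c

lemma kern_int (w : ℂ) (hw : w ≠ 0) : IntegrableOn (fun r => kern r w) (Ioi 0) :=
  Integrable.mono' (int_es.add (int_e_shift (2 * ‖w‖)).1)
    (measurable_kern w).aestronglyMeasurable (kern_bd w hw)

lemma hh_bdd : ∃ C : ℝ, ∀ w : ℂ, w ≠ 0 → ‖hh w‖ ≤ C := by
  refine ⟨√π + ((∫ r in Ioi (0:ℝ), rexp (-r)) + 1 * ∫ x, gs x), fun w hw => ?_⟩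
  unfold hh
  refine (norm_integral_le_of_norm_le (int_es.add (int_e_shift (2 * ‖w‖)).1) (kern_bd w hw)).trans ?_
  have := integral_add int_es (int_e_shift (2 * ‖w‖)).1
  simp only [Pi.add_apply] at *
  rw [this, val_es]
  have := (int_e_shift (2 * ‖w‖)).2
  linarith

lemma hh_asym : ∃ C : ℝ, ∀ w : ℂ, w ≠ 0 → ‖hh w - √π * (1 - 1 / (8 * w))‖ ≤ C / ‖w‖ ^ 2 := by
  refine ⟨(1/4) * ((∫ r in Ioi (0:ℝ), rexp (-r) * (1 / √r) * r ^ 2) + ((∫ r in Ioi (0:ℝ), rexp (-r) * r ^ 2) + 2 * ∫ x, gs x)), fun w hw => ?_⟩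
  have hw' : 0 < ‖w‖ := norm_pos_iff.mpr hw
  have hmain : IntegrableOn (fun r : ℝ => ((rexp (-r) * (1 / √r) : ℝ) : ℂ)
      - ((rexp (-r) * (1 / √r) * r : ℝ) : ℂ) * (1 / (4 * w))) (Ioi 0) :=
    (int_es.ofReal).sub ((int_es1.ofReal).mul_const _)
  have hval : ∫ r in Ioi (0:ℝ), (((rexp (-r) * (1 / √r) : ℝ) : ℂ)
      - ((rexp (-r) * (1 / √r) * r : ℝ) : ℂ) * (1 / (4 * w))) = √π * (1 - 1 / (8 * w)) := by
    rw [integral_sub int_es.ofReal (int_es1.ofReal.mul_const _), integral_mul_const]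
    rw [integral_complex_ofReal, integral_complex_ofReal, val_es, val_es1]
    push_cast; field_simp; ring
  rw [← hval]
  unfold hh
  rw [← integral_sub (kern_int w hw) hmain]
  have hI := (int_es2.add (int_e2_shift (2 * ‖w‖)).1).const_mul (1 / (4 * ‖w‖ ^ 2))
  refine (norm_integral_le_of_norm_le hI ?_).trans ?_
  · filter_upwards [ae_ne (2 * ‖w‖), ae_restrict_mem measurableSet_Ioi] with r hne hr
    have hr : 0 < r := hr
    obtain ⟨hn, hb⟩ := ker_bd r hr w hw hne
    have hk := key_ineq _ hn
    have e : kern r w - (((rexp (-r) * (1 / √r) : ℝ) : ℂ)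
      - ((rexp (-r) * (1 / √r) * r : ℝ) : ℂ) * (1 / (4 * w))) =
      ((rexp (-r) * (1 / √r) : ℝ) : ℂ) * ((csq (1 + r / (2 * w)))⁻¹ - (1 - r / (2 * w) / 2)) := by
      unfold kern
      push_cast; field_simp; ring
    rw [e, norm_mul, Complex.norm_real, Real.norm_of_nonneg (by positivity)]
    have hsr : √r ≠ 0 := (Real.sqrt_pos.mpr hr).ne'
    calc _ ≤ rexp (-r) * (1 / √r) * (‖(r:ℂ) / (2 * w)‖ ^ 2 * (1 + √r * (1 / √|2 * ‖w‖ - r|))) := by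
          gcongr
          exact hk.trans (by gcongr)
      _ = _ := by
          have : ‖(r:ℂ) / (2 * w)‖ = r / (2 * ‖w‖) := by
            rw [norm_div, norm_mul, Complex.norm_real, Real.norm_of_nonneg hr.le]; simp
          rw [this]
          simp only [Pi.add_apply]
          field_simp
          ring
  · rw [integral_const_mul]
    have := integral_add int_es2 (int_e2_shift (2 * ‖w‖)).1
    simp only [Pi.add_apply] at *
    rw [this]
    have h3 := (int_e2_shift (2 * ‖w‖)).2
    rw [div_mul_eq_mul_div, one_mul, mul_comm (1/4:ℝ), mul_one_div, div_div]
    gcongr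

lemma slit_u (r : ℝ) (hr : 0 < r) (w : ℂ) (hw : w.im ≠ 0) :
    1 + (r:ℂ) / (2 * w) ∈ Complex.slitPlane := by
  right
  have hw0 : w ≠ 0 := by rintro rfl; simp at hw
  have hn : Complex.normSq w ≠ 0 := by simpa using hw0
  have : (1 + (r:ℂ) / (2 * w)).im = - (r / 2) * w.im / Complex.normSq w := by
    rw [show (r:ℂ) / (2 * w) = ((r / 2 : ℝ) : ℂ) * w⁻¹ by push_cast; field_simp]
    rw [Complex.add_im, Complex.im_ofReal_mul, Complex.inv_im]; simp; ring
  rw [this]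
  have : r ≠ 0 := hr.ne'
  simp [hw, hn, this]

lemma csq_ne {w : ℂ} (h : w ≠ 0) : csq w ≠ 0 := by
  intro h'; apply h; rw [← csq_sq w, h']; simp

lemma csq_deriv (u : ℂ) (hu : u ∈ Complex.slitPlane) : HasDerivAt csq ((2 * csq u)⁻¹) u := by
  have hu0 := Complex.slitPlane_ne_zero hu
  have := (hasDerivAt_id u).cpow_const (c := (1/2 : ℂ)) hu
  simp only [id] at this
  refine HasDerivAt.congr_deriv (f := csq) this ?_
  rw [Complex.cpow_sub _ _ hu0, Complex.cpow_one]
  change 1 / 2 * (csq u / u) * 1 = _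
  have h2 := csq_sq u
  have h3 := csq_ne hu0
  have h4 : csq u / u = (csq u)⁻¹ := by
    nth_rewrite 2 [← h2]
    field_simp
  rw [h4]; field_simp

lemma norm_u_ge (r : ℝ) (w : ℂ) (hw : w ≠ 0) : |w.im| / ‖w‖ ≤ ‖1 + (r:ℂ) / (2 * w)‖ := by
  have h1 : 1 + (r:ℂ) / (2 * w) = (2 * w + r) / (2 * w) := by field_simp
  have h2 : ‖1 + (r:ℂ) / (2 * w)‖ = ‖2 * w + r‖ / (2 * ‖w‖) := by
    rw [h1, norm_div, norm_mul]; simp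
  have hw' : 0 < ‖w‖ := norm_pos_iff.mpr hw
  rw [h2]
  have := Complex.abs_im_le_norm (2 * w + r)
  simp [abs_mul] at this
  rw [div_le_div_iff₀ (by positivity) (by positivity)]
  nlinarith

lemma hh_diff (w₀ : ℂ) (hw : w₀.im ≠ 0) : DifferentiableAt ℂ hh w₀ := by
  set δ := |w₀.im| / 2 with hδ
  have hδ0 : 0 < δ := by positivity
  set M := ‖w₀‖ + δ with hM
  have hM0 : 0 < M := by positivity
  have hball : ∀ w ∈ Metric.ball w₀ δ, δ ≤ |w.im| ∧ ‖w‖ ≤ M ∧ δ ≤ ‖w‖ ∧ w.im ≠ 0 ∧ w ≠ 0 := by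
    intro w hwb
    rw [mem_ball_iff_norm] at hwb
    have h1 := Complex.abs_im_le_norm (w - w₀)
    have h2 : |w₀.im| - |w.im| ≤ |(w - w₀).im| := by
      rw [Complex.sub_im, abs_sub_comm]; exact abs_sub_abs_le_abs_sub _ _
    have h3 : δ ≤ |w.im| := by linarith
    have h4 := Complex.abs_im_le_norm w
    have h5 := norm_le_norm_add_norm_sub' w w₀
    refine ⟨h3, by linarith, by linarith, abs_pos.mp (by linarith), norm_pos_iff.mp (by linarith)⟩
  have key := hasDerivAt_integral_of_dominated_loc_of_deriv_le (𝕜 := ℂ)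
    (μ := volume.restrict (Ioi (0:ℝ))) (F := fun w r => kern r w) (x₀ := w₀)
    (F' := fun w r => ((rexp (-r) * (1 / √r) : ℝ) : ℂ) *
      (-((2 * csq (1 + r / (2 * w)))⁻¹ * (- (r / (2 * w ^ 2)))) / (csq (1 + r / (2 * w))) ^ 2))
    (s := Metric.ball w₀ δ) (bound := fun r => rexp (-r) * (1 / √r) * r * 
      ((2 * √(δ / M) ^ 3)⁻¹ * (1 / (2 * δ ^ 2)))) (Metric.ball_mem_nhds _ hδ0)
    (Filter.Eventually.of_forall fun w => (measurable_kern w).aestronglyMeasurable)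
    (kern_int w₀ (by rintro rfl; simp at hw)) ?_ ?_ (int_es1.mul_const _) ?_
  · exact key.2.differentiableAt
  · have := measurable_csq
    apply Measurable.aestronglyMeasurable
    fun_prop
  · filter_upwards [ae_restrict_mem measurableSet_Ioi] with r hr w hwb
    have hr : 0 < r := hr
    obtain ⟨b1, b2, b3, b4, b5⟩ := hball w hwb
    have hu : δ / M ≤ ‖1 + (r:ℂ) / (2 * w)‖ := by
      refine le_trans ?_ (norm_u_ge r w b5)
      gcongr
    have hs : √(δ / M) ≤ ‖csq (1 + (r:ℂ) / (2 * w))‖ := by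
      rw [norm_csq]; gcongr
    have hp : 0 < √(δ / M) := Real.sqrt_pos.mpr (by positivity)
    rw [norm_mul, Complex.norm_real, Real.norm_of_nonneg (by positivity), norm_div, norm_neg, norm_mul,
      norm_neg, norm_inv, norm_div, norm_mul, norm_mul, norm_pow, norm_pow, Complex.norm_real, Real.norm_of_nonneg hr.le]
    simp only [Complex.norm_ofNat]
    calc _ ≤ rexp (-r) * (1 / √r) * ((2 * √(δ / M))⁻¹ * (r / (2 * δ ^ 2)) / √(δ / M) ^ 2) := by
          gcongr
      _ = _ := by
        have : √r ≠ 0 := (Real.sqrt_pos.mpr hr).ne'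
        field_simp
  · filter_upwards [ae_restrict_mem measurableSet_Ioi] with r hr w hwb
    have hr : 0 < r := hr
    obtain ⟨b1, b2, b3, b4, b5⟩ := hball w hwb
    have hsl := slit_u r hr w b4
    have hu : HasDerivAt (fun w : ℂ => 1 + (r:ℂ) / (2 * w)) (- (r / (2 * w ^ 2))) w := by
      have := (((hasDerivAt_id w).const_mul (2:ℂ)).inv (by simpa using b5)).const_mul (r:ℂ) |>.const_add 1
      simp only [id] at this
      have e : (fun w : ℂ => 1 + (r:ℂ) / (2 * w)) = fun w : ℂ => 1 + (r:ℂ) * (2 * w)⁻¹ := by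
        funext w; rw [div_eq_mul_inv]
      rw [e]
      refine HasDerivAt.congr_deriv this ?_
      field_simp
    have h1 : HasDerivAt (fun w : ℂ => csq (1 + (r:ℂ) / (2 * w))) _ w := HasDerivAt.comp (h₂ := csq) w (csq_deriv _ hsl) hu
    have h2 := h1.inv (csq_ne (Complex.slitPlane_ne_zero hsl))
    exact h2.const_mul _

lemma hh_conj (w : ℂ) (hw : w.im ≠ 0) : hh (starRingEnd ℂ w) = starRingEnd ℂ (hh w) := by
  unfold hh
  rw [← integral_conj]
  refine setIntegral_congr_fun measurableSet_Ioi ?_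
  intro r hr
  have hsl := slit_u r hr w hw
  simp only [kern, map_mul, Complex.conj_ofReal, map_inv₀]
  congr 2
  unfold csq
  have h := Complex.conj_cpow (1 + (r:ℂ) / (2 * w)) (1/2) (Complex.mem_slitPlane_iff_arg.mp hsl).1
  simp only [map_add, map_one, map_div₀, Complex.conj_ofReal, map_mul, Complex.conj_ofNat] at h
  rw [h, ]

noncomputable def HH (z : ℂ) : ℂ := hh z * hh (-z)

noncomputable def GG (z : ℂ) : ℂ := HH z * (π ^ 2 - HH z ^ 2)

lemma GG_diff (z : ℂ) (hz : z.im ≠ 0) : DifferentiableAt ℂ GG z := by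
  have h1 := hh_diff z hz
  have h2 : DifferentiableAt ℂ (fun z => hh (-z)) z := by
    have := hh_diff (-z) (by simpa using hz)
    exact this.comp z differentiableAt_id.neg
  have h3 : DifferentiableAt ℂ HH z := h1.mul h2
  exact h3.mul ((differentiableAt_const _).sub (h3.pow 2))

lemma HH_real (y : ℝ) (hy : y ≠ 0) : (HH (y * Complex.I)).im = 0 := by
  unfold HH
  have h := hh_conj (y * Complex.I) (by simpa using hy)
  rw [map_mul, Complex.conj_ofReal, Complex.conj_I, mul_neg] at h
  rw [h, Complex.mul_conj]; simp

lemma GG_real (y : ℝ) (hy : y ≠ 0) : (GG (y * Complex.I)).im = 0 := by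
  have h := HH_real y hy
  unfold GG
  obtain ⟨x, hx⟩ : ∃ x : ℝ, HH (y * Complex.I) = x := ⟨_, Complex.ext (by simp; rfl) (by simpa using h)⟩
  rw [hx]
  norm_cast

lemma HH_bdd : ∃ C : ℝ, 0 < C ∧ ∀ w : ℂ, w ≠ 0 → ‖HH w‖ ≤ C := by
  obtain ⟨C, hC⟩ := hh_bdd
  refine ⟨C * C + 1, by nlinarith [mul_self_nonneg C], fun w hw => ?_⟩
  unfold HH
  rw [norm_mul]
  have h1 := hC w hw
  have h2 := hC (-w) (by simpa using hw)
  have := mul_le_mul h1 h2 (norm_nonneg _) ((norm_nonneg _).trans h1)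
  linarith

lemma HH_asym : ∃ C : ℝ, 0 < C ∧ ∀ w : ℂ, w ≠ 0 → ‖HH w - π‖ ≤ C / (1 + ‖w‖ ^ 2) := by
  obtain ⟨B, hB0, hB⟩ := HH_bdd
  obtain ⟨C, hC⟩ := hh_asym
  obtain ⟨D, hD⟩ := hh_bdd
  have hC0 : 0 ≤ C := by have := (norm_nonneg _).trans (hC 1 one_ne_zero); simpa using this
  have hD0 : 0 ≤ D := (norm_nonneg _).trans (hD 1 one_ne_zero)
  set E := C * D + 2 * √π * C + π with hE
  have hE0 : 0 < E := by positivity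
  refine ⟨2 * (E + (B + π)), by positivity, fun w hw => ?_⟩
  have hw' : 0 < ‖w‖ := norm_pos_iff.mpr hw
  rw [le_div_iff₀ (by positivity)]
  have hbd : ‖HH w - π‖ ≤ B + π := by
    refine (norm_sub_le _ _).trans ?_
    have := hB w hw
    rw [Complex.norm_real, Real.norm_of_nonneg pi_pos.le]; linarith
  rcases le_total ‖w‖ 1 with h1 | h1
  · have : ‖w‖ ^ 2 ≤ 1 := by nlinarith
    nlinarith [norm_nonneg (HH w - π), Real.pi_pos]
  · have h2 : 1 ≤ ‖w‖ ^ 2 := by nlinarith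
    have e : HH w - π = (hh w - √π * (1 - 1 / (8 * w))) * hh (-w) +
        √π * (1 - 1 / (8 * w)) * (hh (-w) - √π * (1 - 1 / (8 * (-w)))) - π / (64 * w ^ 2) := by
      have hpi : (√π : ℂ) * √π = π := by norm_cast; exact Real.mul_self_sqrt pi_pos.le
      have : √π * (1 - 1 / (8 * w)) * (√π * (1 - 1 / (8 * (-w)))) = π - π / (64 * w ^ 2) := by
        rw [mul_mul_mul_comm, hpi]; field_simp; ring
      unfold HH
      linear_combination this
    have hA := hC w hw
    have hA' := hC (-w) (by simpa using hw)
    rw [norm_neg] at hA'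
    have hu : ‖(√π : ℂ) * (1 - 1 / (8 * w))‖ ≤ 2 * √π := by
      rw [norm_mul, Complex.norm_real, Real.norm_of_nonneg (Real.sqrt_nonneg _), mul_comm]
      gcongr
      refine (norm_sub_le _ _).trans ?_
      rw [norm_div, norm_mul]; simp
      have : ‖w‖⁻¹ ≤ 1 := inv_le_one_of_one_le₀ h1
      linarith
    have hl : ‖(π : ℂ) / (64 * w ^ 2)‖ ≤ π / ‖w‖ ^ 2 := by
      rw [norm_div, norm_mul, norm_pow, Complex.norm_real, Real.norm_of_nonneg pi_pos.le]; simp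
      gcongr
      linarith
    have hfin : ‖HH w - π‖ ≤ E / ‖w‖ ^ 2 := by
      rw [e]
      refine (norm_sub_le _ _).trans ?_
      refine (add_le_add (norm_add_le _ _) hl).trans ?_
      rw [norm_mul, norm_mul (√π * (1 - 1 / (8 * w)) : ℂ)]
      have m1 := mul_le_mul hA (hD (-w) (by simpa using hw)) (norm_nonneg _) (by positivity)
      have m2 := mul_le_mul hu hA' (norm_nonneg _) (by positivity)
      refine (add_le_add (add_le_add m1 m2) le_rfl).trans (le_of_eq ?_)
      rw [hE]; field_simp
    rw [le_div_iff₀ (by positivity)] at hfin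
    nlinarith [norm_nonneg (HH w - π), Real.pi_pos]

lemma GG_bdd : ∃ C : ℝ, 0 < C ∧ ∀ w : ℂ, w ≠ 0 → ‖GG w‖ ≤ C / (1 + ‖w‖ ^ 2) := by
  obtain ⟨B, hB0, hB⟩ := HH_bdd
  obtain ⟨C, hC0, hC⟩ := HH_asym
  refine ⟨C * (B * (B + π)), by positivity, fun w hw => ?_⟩
  have e : GG w = - ((HH w - π) * (HH w * (HH w + π))) := by unfold GG; ring
  rw [e, norm_neg, norm_mul, norm_mul, mul_div_right_comm]
  have h1 := hC w hw
  have h2 := hB w hw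
  have h3 : ‖HH w + π‖ ≤ B + π := by
    refine (norm_add_le _ _).trans ?_
    rw [Complex.norm_real, Real.norm_of_nonneg pi_pos.le]; linarith
  gcongr

lemma GG_line_cont (ε : ℝ) (hε : 0 < ε) : Continuous (fun t : ℝ => GG (t + ε * Complex.I)) := by
  rw [continuous_iff_continuousAt]
  intro t
  have h := (GG_diff (t + ε * Complex.I) (by simpa using hε.ne')).continuousAt
  exact ContinuousAt.comp (f := fun t : ℝ => (t + ε * Complex.I : ℂ)) h (by fun_prop)

lemma GG_line_bd (C : ℝ) (hC0 : 0 < C) (hC : ∀ w : ℂ, w ≠ 0 → ‖GG w‖ ≤ C / (1 + ‖w‖ ^ 2))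
    (t ε : ℝ) (hε : 0 < ε) : ‖GG (t + ε * Complex.I)‖ ≤ C * (1 + t ^ 2)⁻¹ := by
  refine (hC _ ?_).trans ?_
  · intro h; have := congrArg Complex.im h; simp at this; exact hε.ne' this
  · rw [div_eq_mul_inv]
    have := Complex.abs_re_le_norm (t + ε * Complex.I)
    simp only [Complex.add_re, Complex.ofReal_re, Complex.mul_re, Complex.I_re, Complex.I_im, Complex.ofReal_im, mul_zero, zero_mul, sub_zero, add_zero] at this
    rw [← sq_abs t]
    gcongr

lemma contour (ε : ℝ) (hε : 0 < ε) : ∫ t in Ioi (0:ℝ), (GG (t + ε * Complex.I)).re = 0 := by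
  obtain ⟨C, hC0, hC⟩ := GG_bdd
  have hcont := GG_line_cont ε hε
  have hint : Integrable (fun t : ℝ => GG (t + ε * Complex.I)) :=
    Integrable.mono' (integrable_inv_one_add_sq.const_mul C) hcont.aestronglyMeasurable
      (Filter.Eventually.of_forall fun t => GG_line_bd C hC0 hC t ε hε)
  have hlim := intervalIntegral_tendsto_integral_Ioi 0 hint.re.integrableOn Filter.tendsto_id
  refine tendsto_nhds_unique hlim ?_
  have hb : ∀ R : ℝ, ε < R → ‖∫ t in (0:ℝ)..R, (GG (t + ε * Complex.I)).re‖ ≤ 2 * C * R⁻¹ := by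
    intro R hR
    have hR0 : 0 < R := hε.trans hR
    have hrect := Complex.integral_boundary_rect_eq_zero_of_differentiableOn GG (ε * Complex.I) (R + R * Complex.I) ?_
    · simp only [Complex.mul_re, Complex.add_re, Complex.add_im, Complex.mul_im, Complex.ofReal_re,
        Complex.ofReal_im, Complex.I_re, Complex.I_im, mul_zero, mul_one, sub_zero, add_zero, zero_add,
        Complex.ofReal_zero, smul_eq_mul] at hrect
      have hre := congrArg Complex.re hrect
      have hL : (Complex.I * ∫ y in ε..R, GG (y * Complex.I)).re = 0 := by
        rw [Complex.I_mul_re, neg_eq_zero]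
        have : ∫ y in ε..R, GG (y * Complex.I) = ((∫ y in ε..R, (GG (y * Complex.I)).re : ℝ) : ℂ) := by
          rw [← intervalIntegral.integral_ofReal]
          apply intervalIntegral.integral_congr
          intro y hy
          rw [uIcc_of_le hR.le] at hy
          have := GG_real y (by linarith [hy.1])
          exact Complex.ext (by simp) (by simpa using this)
        rw [this]; simp
      have hbot : (∫ t in (0:ℝ)..R, GG (t + ε * Complex.I)).re = ∫ t in (0:ℝ)..R, (GG (t + ε * Complex.I)).re := by
        exact (Complex.reCLM.intervalIntegral_comp_comm (hcont.intervalIntegrable 0 R)).symm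
      have htop : ‖∫ t in (0:ℝ)..R, GG (t + R * Complex.I)‖ ≤ C * R⁻¹ := by
        have := intervalIntegral.norm_integral_le_of_norm_le_const (a := 0) (b := R) (C := C / R ^ 2)
          (f := fun t : ℝ => GG (t + R * Complex.I)) ?_
        · refine this.trans (le_of_eq ?_)
          rw [sub_zero, abs_of_pos hR0]; field_simp
        · intro t _
          have hn := Complex.abs_im_le_norm (t + R * Complex.I)
          simp [abs_of_pos hR0] at hn
          refine (hC _ (norm_pos_iff.mp (by linarith))).trans ?_
          gcongr
          nlinarith
      have hright : ‖Complex.I * ∫ y in ε..R, GG (R + y * Complex.I)‖ ≤ C * R⁻¹ := by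
        rw [norm_mul, Complex.norm_I, one_mul]
        have := intervalIntegral.norm_integral_le_of_norm_le_const (a := ε) (b := R) (C := C / R ^ 2)
          (f := fun y : ℝ => GG (R + y * Complex.I)) ?_
        · refine this.trans ?_
          rw [abs_of_pos (by linarith)]
          calc C / R ^ 2 * (R - ε) ≤ C / R ^ 2 * R := by gcongr; linarith
            _ = _ := by field_simp
        · intro y _
          have hn := Complex.abs_re_le_norm (R + y * Complex.I)
          simp [abs_of_pos hR0] at hn
          refine (hC _ (norm_pos_iff.mp (by linarith))).trans ?_
          gcongr
          nlinarith
      simp only [Complex.add_re, Complex.sub_re, Complex.zero_re, hL, hbot] at hre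
      have h1 := Complex.abs_re_le_norm (∫ t in (0:ℝ)..R, GG (t + R * Complex.I))
      have h2 := Complex.abs_re_le_norm (Complex.I * ∫ y in ε..R, GG (R + y * Complex.I))
      have h1' := abs_le.mp (h1.trans htop)
      have h2' := abs_le.mp (h2.trans hright)
      rw [Real.norm_eq_abs, abs_le]
      constructor <;> linarith [h1'.1, h1'.2, h2'.1, h2'.2]
    · intro z hz
      have him : z.im ∈ uIcc ε R := by
        have := hz.2
        simpa using this
      rw [uIcc_of_le hR.le] at him
      exact (GG_diff z (by linarith [him.1])).differentiableWithinAt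
  apply squeeze_zero_norm' (a := fun R : ℝ => 2 * C * R⁻¹)
  · filter_upwards [Filter.eventually_gt_atTop ε] with R hR
    exact hb R hR
  · simpa using (tendsto_inv_atTop_zero (𝕜 := ℝ)).const_mul (2 * C)

lemma csq_cwa (x : ℝ) (hx : x ≠ 0) : ContinuousWithinAt csq {z : ℂ | 0 ≤ z.im} (x : ℂ) := by
  have hlog : ContinuousWithinAt Complex.log {z : ℂ | 0 ≤ z.im} (x : ℂ) := by
    rcases lt_or_gt_of_ne hx with h | h
    · exact Complex.continuousWithinAt_log_of_re_neg_of_im_zero (by simpa using h) (by simp)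
    · exact (continuousAt_clog (by left; simpa using h)).continuousWithinAt
  have h1 : ContinuousWithinAt (fun w => Complex.exp (Complex.log w * (1/2))) {z : ℂ | 0 ≤ z.im} (x : ℂ) :=
    (hlog.mul_const _).cexp
  have hx' : (x : ℂ) ≠ 0 := by exact_mod_cast hx
  refine h1.congr_of_eventuallyEq ?_ ?_
  · have : ∀ᶠ w in nhdsWithin (x : ℂ) {z : ℂ | 0 ≤ z.im}, w ≠ 0 :=
      Filter.Eventually.filter_mono nhdsWithin_le_nhds (isOpen_ne.mem_nhds hx')
    filter_upwards [this] with w hw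
    unfold csq; rw [Complex.cpow_def_of_ne_zero hw]
  · unfold csq; rw [Complex.cpow_def_of_ne_zero hx']

lemma hh_lim (x s : ℝ) (hx : x ≠ 0) (hs : |s| = 1) (h : 0 < x ∨ s ≤ 0) :
    Filter.Tendsto (fun ε : ℝ => hh (x + (s * ε : ℝ) * Complex.I)) (nhdsWithin 0 (Ioi 0)) (nhds (hh x)) := by
  have hx' : (x : ℂ) ≠ 0 := by exact_mod_cast hx
  have hxp : 0 < |x| := abs_pos.mpr hx
  have hne : ∀ ε : ℝ, (x + (s * ε : ℝ) * Complex.I : ℂ) ≠ 0 := by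
    intro ε he
    have := congrArg Complex.re he
    simp at this; exact hx this
  unfold hh
  refine tendsto_integral_filter_of_dominated_convergence
    (fun r => √((|x| + 1) / |x|) * ‖kern r x‖) ?_ ?_ ((kern_int x hx').norm.const_mul _) ?_
  · exact Filter.Eventually.of_forall fun ε => (measurable_kern _).aestronglyMeasurable
  · have h1 : ∀ᶠ ε : ℝ in nhdsWithin 0 (Ioi 0), ε < 1 :=
      Filter.Eventually.filter_mono nhdsWithin_le_nhds (isOpen_Iio.mem_nhds (by norm_num))
    filter_upwards [h1, self_mem_nhdsWithin] with ε hε1 hε0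
    have hε0 : 0 < ε := hε0
    filter_upwards [ae_ne (2 * ‖(x:ℂ)‖), ae_restrict_mem measurableSet_Ioi] with r hne' hr
    have hr : 0 < r := hr
    set w : ℂ := x + (s * ε : ℝ) * Complex.I with hw
    have hw0 : w ≠ 0 := hne ε
    have hwp : 0 < ‖w‖ := norm_pos_iff.mpr hw0
    have hwn : ‖w‖ ≤ |x| + 1 := by
      refine (norm_add_le _ _).trans ?_
      rw [norm_mul, Complex.norm_I, Complex.norm_real, Complex.norm_real, Real.norm_eq_abs, Real.norm_eq_abs, abs_mul, hs, abs_of_pos hε0]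
      linarith
    have hu0 := (ker_bd r hr x hx' hne').1
    have e1 : ‖1 + (r:ℂ) / (2 * w)‖ = ‖2 * w + r‖ / (2 * ‖w‖) := by
      rw [show 1 + (r:ℂ) / (2 * w) = (2 * w + r) / (2 * w) by field_simp, norm_div, norm_mul]; simp
    have e2 : ‖1 + (r:ℂ) / (2 * x)‖ = |2 * x + r| / (2 * |x|) := by
      rw [show 1 + (r:ℂ) / (2 * x) = ((2 * x + r : ℝ) : ℂ) / (2 * x) by push_cast; field_simp, norm_div, norm_mul,
        Complex.norm_real, Complex.norm_real]; simp
    have e3 : |2 * x + r| ≤ ‖2 * w + r‖ := by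
      have := Complex.abs_re_le_norm (2 * w + r)
      simpa [hw] using this
    have e4 : ‖1 + (r:ℂ) / (2 * x)‖ * (|x| / (|x| + 1)) ≤ ‖1 + (r:ℂ) / (2 * w)‖ := by
      rw [e1, e2]
      calc _ = |2 * x + r| / (2 * (|x| + 1)) := by field_simp
        _ ≤ _ := by gcongr
    unfold kern
    rw [norm_mul, norm_mul, mul_left_comm]
    gcongr
    rw [norm_inv, norm_inv, norm_csq, norm_csq]
    have hp : 0 < ‖1 + (r:ℂ) / (2 * x)‖ := norm_pos_iff.mpr hu0
    calc _ ≤ (√(‖1 + (r:ℂ) / (2 * x)‖ * (|x| / (|x| + 1))))⁻¹ := by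
          apply inv_anti₀ (Real.sqrt_pos.mpr (by positivity)); exact Real.sqrt_le_sqrt e4
      _ = _ := by
        rw [Real.sqrt_mul hp.le, mul_inv, mul_comm, ← Real.sqrt_inv (|x| / _), inv_div]
  · filter_upwards [ae_ne (2 * ‖(x:ℂ)‖), ae_restrict_mem measurableSet_Ioi] with r hne' hr
    have hr : 0 < r := hr
    have hu0 := (ker_bd r hr x hx' hne').1
    have hu : 1 + (r:ℂ) / (2 * x) = ((1 + r / (2 * x) : ℝ) : ℂ) := by push_cast; rfl
    have hu0' : 1 + r / (2 * x) ≠ 0 := by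
      intro h; apply hu0; rw [hu, h]; simp
    unfold kern
    apply Filter.Tendsto.const_mul
    apply Filter.Tendsto.inv₀ _ (csq_ne hu0)
    have hc : ContinuousAt (fun ε : ℝ => 1 + (r:ℂ) / (2 * (x + (s * ε : ℝ) * Complex.I))) 0 := by
      apply ContinuousAt.add continuousAt_const
      apply ContinuousAt.div continuousAt_const (by fun_prop)
      simpa using hx
    have hc1 : Filter.Tendsto (fun ε : ℝ => 1 + (r:ℂ) / (2 * (x + (s * ε : ℝ) * Complex.I))) (nhdsWithin 0 (Ioi 0))
        (nhds (1 + (r:ℂ) / (2 * x))) := by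
      have := hc.tendsto
      simp only [mul_zero, Complex.ofReal_zero, zero_mul, add_zero] at this
      exact this.mono_left nhdsWithin_le_nhds
    rcases h with h | h
    · have : ContinuousAt csq (1 + (r:ℂ) / (2 * x)) := by
        apply (csq_deriv _ _).continuousAt
        left; rw [hu, Complex.ofReal_re]; positivity
      exact this.tendsto.comp hc1
    · have h2 := csq_cwa _ hu0'
      rw [← hu] at h2
      refine h2.tendsto.comp (tendsto_nhdsWithin_iff.mpr ⟨hc1, ?_⟩)
      filter_upwards [self_mem_nhdsWithin] with ε hε0
      have hε0 : 0 < ε := hε0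
      set w : ℂ := x + (s * ε : ℝ) * Complex.I with hw
      have hwim : w.im = s * ε := by simp [hw]
      change 0 ≤ (1 + (r:ℂ) / (2 * w)).im
      have : (1 + (r:ℂ) / (2 * w)).im = (r / 2) * (-w.im) / Complex.normSq w := by
        have hw0 : w ≠ 0 := hne ε
        rw [show (r:ℂ) / (2 * w) = ((r / 2 : ℝ) : ℂ) * w⁻¹ by push_cast; field_simp]
        rw [Complex.add_im, Complex.im_ofReal_mul, Complex.inv_im]; simp; ring
      rw [this, hwim]
      have := Complex.normSq_nonneg w
      have h3 : 0 ≤ -(s * ε) := by nlinarith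
      positivity

lemma csq_pos (x : ℝ) (hx : 0 ≤ x) : csq x = ((√x : ℝ) : ℂ) := by
  unfold csq
  rw [Real.sqrt_eq_rpow, Complex.ofReal_cpow hx]; norm_num

lemma csq_neg (x : ℝ) (hx : x ≤ 0) : csq x = Complex.I * ((√(-x) : ℝ) : ℂ) := by
  rw [← csq_pos (-x) (by linarith)]
  unfold csq
  rw [Complex.ofReal_cpow_of_nonpos hx, mul_comm]
  congr 1
  · rw [show (π : ℂ) * Complex.I * (1/2) = π / 2 * Complex.I by ring, Complex.exp_pi_div_two_mul_I]
  · push_cast; rfl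

lemma sub_alg (t s A B E : ℝ) (ht : 0 < t) (hs : 0 < s) (hA : 0 ≤ A) (h : A * B = t / 2 * s ^ 2) :
    |t * s| * (E * (1 / √A) * (1 / √B)) = √(2 * t) * E := by
  have h1 : √A * √B = √(t / 2) * s := by
    rw [← Real.sqrt_mul hA, h, Real.sqrt_mul (by positivity), Real.sqrt_sq hs.le]
  have h2 : √(2 * t) * √(t / 2) = t := by
    rw [← Real.sqrt_mul (by positivity), show 2 * t * (t / 2) = t ^ 2 by ring, Real.sqrt_sq ht.le]
  have h3 : 0 < √(t / 2) := Real.sqrt_pos.mpr (by positivity)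
  rw [abs_of_pos (by positivity), show t * s * (E * (1 / √A) * (1 / √B)) = t * s * E / (√A * √B) by
    field_simp, h1, div_eq_iff (by positivity)]
  linear_combination (-(s * E)) * h2

lemma cosh_img (t a : ℝ) (ht : 0 < t) : (fun u => t * (Real.cosh u + a)) '' Ioi 0 = Ioi (t * (1 + a)) := by
  ext y
  simp only [mem_image, mem_Ioi]
  constructor
  · rintro ⟨u, hu, rfl⟩
    have := Real.one_lt_cosh.mpr hu.ne'
    gcongr
  · intro hy
    have h1 : 1 < y / t - a := by
      rw [lt_sub_iff_add_lt, lt_div_iff₀ ht]; linarith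
    refine ⟨Real.arcosh (y / t - a), Real.arcosh_pos h1, ?_⟩
    rw [Real.cosh_arcosh h1.le]; field_simp; ring

lemma cosh_sub (t a : ℝ) (ht : 0 < t) (g : ℝ → ℝ) : ∫ r in Ioi (t * (1 + a)), g r =
    ∫ u in Ioi (0:ℝ), |t * Real.sinh u| * g (t * (Real.cosh u + a)) := by
  rw [← cosh_img t a ht]
  refine integral_image_eq_integral_abs_deriv_smul measurableSet_Ioi (f' := fun u => t * Real.sinh u) ?_ ?_ g
  · intro u _
    exact (((Real.hasDerivAt_cosh u).add_const a).const_mul t).hasDerivWithinAt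
  · intro u hu v hv huv
    simp only at huv
    have : Real.cosh u = Real.cosh v := by
      have := mul_left_cancel₀ ht.ne' huv; linarith
    exact Real.cosh_injOn (mem_Ici.mpr (le_of_lt hu)) (mem_Ici.mpr (le_of_lt hv)) this

lemma ev_a (t : ℝ) (ht : 0 < t) : ∫ r in Ioi (0:ℝ), rexp (-r) * (1 / √r) * (1 / √(1 + r / (2 * t))) =
    √(2 * t) * rexp t * K0 t := by
  have := cosh_sub t (-1) ht (fun r => rexp (-r) * (1 / √r) * (1 / √(1 + r / (2 * t))))
  rw [show t * (1 + -1) = 0 by ring] at this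
  rw [this]
  unfold K0
  rw [← integral_const_mul]
  refine setIntegral_congr_fun measurableSet_Ioi ?_
  intro u hu
  have hu : 0 < u := hu
  have hc := Real.one_le_cosh u
  have hsq := Real.cosh_sq u
  simp only
  rw [sub_alg t (Real.sinh u) _ _ _ ht (Real.sinh_pos_iff.mpr hu) (mul_nonneg ht.le (by linarith)) ?_]
  · rw [mul_assoc, ← Real.exp_add]; ring_nf
  · field_simp
    nlinarith

lemma ev_c (t : ℝ) (ht : 0 < t) : ∫ r in Ioi (2 * t), rexp (-r) * (1 / √r) * (1 / √(r / (2 * t) - 1)) =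
    √(2 * t) * rexp (-t) * K0 t := by
  have := cosh_sub t 1 ht (fun r => rexp (-r) * (1 / √r) * (1 / √(r / (2 * t) - 1)))
  rw [show t * (1 + 1) = 2 * t by ring] at this
  rw [this]
  unfold K0
  rw [← integral_const_mul]
  refine setIntegral_congr_fun measurableSet_Ioi ?_
  intro u hu
  have hu : 0 < u := hu
  have hc := Real.one_le_cosh u
  have hsq := Real.cosh_sq u
  simp only
  rw [sub_alg t (Real.sinh u) _ _ _ ht (Real.sinh_pos_iff.mpr hu) (mul_nonneg ht.le (by linarith)) ?_]
  · rw [mul_assoc, ← Real.exp_add]; ring_nf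
  · field_simp
    nlinarith

lemma cos_img (t : ℝ) (ht : 0 < t) : (fun θ => t * (1 - Real.cos θ)) '' Ioo 0 π = Ioo 0 (2 * t) := by
  ext y
  simp only [mem_image, mem_Ioo]
  constructor
  · rintro ⟨u, hu, rfl⟩
    have h1 : Real.cos u < Real.cos 0 := Real.cos_lt_cos_of_nonneg_of_le_pi le_rfl hu.2.le hu.1
    have h2 : Real.cos π < Real.cos u := Real.cos_lt_cos_of_nonneg_of_le_pi hu.1.le le_rfl hu.2
    rw [Real.cos_zero] at h1
    rw [Real.cos_pi] at h2
    constructor <;> nlinarith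
  · rintro ⟨hy0, hy1⟩
    have h1 : 0 < y / t := by positivity
    have h2 : y / t < 2 := by rw [div_lt_iff₀ ht]; exact hy1
    refine ⟨Real.arccos (1 - y / t), ⟨Real.arccos_pos.mpr (by linarith), ?_⟩, ?_⟩
    · refine lt_of_le_of_ne (Real.arccos_le_pi _) ?_
      intro h
      rw [Real.arccos_eq_pi] at h
      linarith
    · rw [Real.cos_arccos (by linarith) (by linarith)]; field_simp; ring

lemma ev_b (t : ℝ) (ht : 0 < t) : ∫ r in Ioo 0 (2 * t), rexp (-r) * (1 / √r) * (1 / √(1 - r / (2 * t))) =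
    √(2 * t) * rexp (-t) * (π * I0 t) := by
  rw [← cos_img t ht]
  rw [integral_image_eq_integral_abs_deriv_smul measurableSet_Ioo (f' := fun u => t * Real.sin u)]
  · unfold I0
    rw [← mul_assoc π, mul_one_div_cancel pi_ne_zero, one_mul, intervalIntegral.integral_of_le pi_pos.le,
      integral_Ioc_eq_integral_Ioo, ← integral_const_mul]
    refine setIntegral_congr_fun measurableSet_Ioo ?_
    intro u hu
    have hc := Real.cos_le_one u
    have hsq := Real.sin_sq_add_cos_sq u
    simp only [smul_eq_mul]
    rw [sub_alg t (Real.sin u) _ _ _ ht (Real.sin_pos_of_mem_Ioo hu) (mul_nonneg ht.le (by linarith)) ?_]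
    · rw [mul_assoc, ← Real.exp_add]; ring_nf
    · field_simp
      nlinarith
  · intro u _
    have := ((Real.hasDerivAt_cos u).const_sub 1).const_mul t
    rw [neg_neg] at this
    exact this.hasDerivWithinAt
  · intro u hu v hv huv
    simp only at huv
    have : Real.cos u = Real.cos v := by
      have := mul_left_cancel₀ ht.ne' huv; linarith
    exact Real.injOn_cos ⟨hu.1.le, hu.2.le⟩ ⟨hv.1.le, hv.2.le⟩ this

lemma hh_pos (t : ℝ) (ht : 0 < t) : hh t = ((√(2 * t) * rexp t * K0 t : ℝ) : ℂ) := by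
  rw [← ev_a t ht]
  unfold hh
  rw [← integral_complex_ofReal]
  refine setIntegral_congr_fun measurableSet_Ioi ?_
  intro r hr
  have hr : 0 < r := hr
  simp only [kern]
  rw [show 1 + (r:ℂ) / (2 * t) = ((1 + r / (2 * t) : ℝ) : ℂ) by push_cast; rfl, csq_pos _ (by positivity)]
  push_cast
  ring

lemma hh_neg (t : ℝ) (ht : 0 < t) : hh (-(t:ℂ)) =
    ((√(2 * t) * rexp (-t) * (π * I0 t) : ℝ) : ℂ) - Complex.I * ((√(2 * t) * rexp (-t) * K0 t : ℝ) : ℂ) := by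
  rw [← ev_b t ht, ← ev_c t ht]
  have hki := kern_int (-(t:ℂ)) (by simpa using ht.ne')
  unfold hh
  rw [← Ioc_union_Ioi_eq_Ioi (a := (0:ℝ)) (b := 2 * t) (by positivity)] at hki ⊢
  rw [setIntegral_union Ioc_disjoint_Ioi_same measurableSet_Ioi hki.left_of_union hki.right_of_union,
    integral_Ioc_eq_integral_Ioo, sub_eq_add_neg]
  congr 1
  · rw [← integral_complex_ofReal]
    refine setIntegral_congr_fun measurableSet_Ioo ?_
    intro r hr
    have h1 : r / (2 * t) ≤ 1 := by rw [div_le_one (by positivity)]; exact hr.2.le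
    simp only [kern]
    rw [show 1 + (r:ℂ) / (2 * -(t:ℂ)) = ((1 - r / (2 * t) : ℝ) : ℂ) by push_cast; rw [mul_neg, div_neg]; ring, csq_pos _ (by linarith)]
    push_cast
    ring
  · rw [← integral_complex_ofReal, ← neg_mul, ← integral_const_mul]
    refine setIntegral_congr_fun measurableSet_Ioi ?_
    intro r hr
    have h1 : 1 ≤ r / (2 * t) := by rw [one_le_div (by positivity)]; exact le_of_lt hr
    simp only [kern]
    rw [show 1 + (r:ℂ) / (2 * -(t:ℂ)) = ((1 - r / (2 * t) : ℝ) : ℂ) by push_cast; rw [mul_neg, div_neg]; ring, csq_neg _ (by linarith), mul_inv, Complex.inv_I, neg_sub]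
    push_cast
    ring

lemma HH_val (t : ℝ) (ht : 0 < t) : HH t =
    ((2 * t * (π * I0 t * K0 t) : ℝ) : ℂ) - Complex.I * ((2 * t * K0 t ^ 2 : ℝ) : ℂ) := by
  unfold HH
  rw [hh_pos t ht, hh_neg t ht]
  have h1 : (√(2 * t) : ℂ) * √(2 * t) = 2 * t := by
    norm_cast; exact Real.mul_self_sqrt (by positivity)
  have h2 : (rexp t : ℂ) * rexp (-t) = 1 := by
    norm_cast; rw [← Real.exp_add]; simp
  push_cast at *
  linear_combination (Complex.exp t * Complex.exp (-t) * K0 t * (π * I0 t - Complex.I * K0 t)) * h1 +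
    (2 * t * K0 t * (π * I0 t - Complex.I * K0 t)) * h2

lemma HH_lim (t : ℝ) (ht : 0 < t) :
    Filter.Tendsto (fun ε : ℝ => HH (t + ε * Complex.I)) (nhdsWithin 0 (Ioi 0)) (nhds (HH t)) := by
  have h1 := hh_lim t 1 ht.ne' (by simp) (Or.inl ht)
  have h2 := hh_lim (-t) (-1) (by simpa using ht.ne') (by simp) (Or.inr (by norm_num))
  have h3 := h1.mul h2
  unfold HH
  push_cast at h3
  refine h3.congr ?_
  intro ε
  congr 2
  · ring
  · ring

lemma GG_lim (t : ℝ) (ht : 0 < t) :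
    Filter.Tendsto (fun ε : ℝ => GG (t + ε * Complex.I)) (nhdsWithin 0 (Ioi 0)) (nhds (GG t)) := by
  have h := HH_lim t ht
  exact h.mul ((h.pow 2).const_sub _)

lemma GG_val (t : ℝ) (ht : 0 < t) : (GG t).re = 24 * π * (I0 t * K0 t ^ 5 * t ^ 3)
    - 8 * π ^ 3 * (I0 t * K0 t * ((I0 t)^2 * (K0 t)^2 - 1/(4*t^2)) * t^3) := by
  unfold GG
  rw [HH_val t ht]
  simp [pow_two]
  field_simp
  ring

lemma meas_K : Measurable K0 := by
  have : Measurable (Function.uncurry fun t u : ℝ => rexp (-(t * Real.cosh u))) := by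
    unfold Function.uncurry
    have := Real.measurable_cosh
    fun_prop
  exact (this.stronglyMeasurable.integral_prod_right).measurable

lemma meas_I : Measurable I0 := by
  have : Measurable (Function.uncurry fun t u : ℝ => rexp (t * Real.cos u)) := by
    unfold Function.uncurry
    fun_prop
  have h := (this.stronglyMeasurable.integral_prod_right (ν := volume.restrict (Ioc 0 π))).measurable
  have e : I0 = fun t => (1 / π) * ∫ u in Ioc 0 π, rexp (t * Real.cos u) := by
    funext t; unfold I0; rw [intervalIntegral.integral_of_le pi_pos.le]
  rw [e]
  exact h.const_mul _

lemma int_GG : IntegrableOn (fun t : ℝ => (GG t).re) (Ioi 0) ∧ ∫ t in Ioi (0:ℝ), (GG t).re = 0 := by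
  obtain ⟨C, hC0, hC⟩ := GG_bdd
  constructor
  · refine Integrable.mono' (integrable_inv_one_add_sq.const_mul C).integrableOn ?_ ?_
    · have hm : Measurable (fun t : ℝ => 24 * π * (I0 t * K0 t ^ 5 * t ^ 3)
        - 8 * π ^ 3 * (I0 t * K0 t * ((I0 t)^2 * (K0 t)^2 - 1/(4*t^2)) * t^3)) := by
        have := meas_K
        have := meas_I
        fun_prop
      refine hm.aestronglyMeasurable.congr ?_
      filter_upwards [ae_restrict_mem measurableSet_Ioi] with t ht
      exact (GG_val t ht).symm
    · filter_upwards [ae_restrict_mem measurableSet_Ioi] with t ht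
      have ht : 0 < t := ht
      refine (Complex.abs_re_le_norm _).trans ((hC t (by exact_mod_cast ht.ne')).trans (le_of_eq ?_))
      rw [Complex.norm_real, Real.norm_eq_abs, sq_abs, div_eq_mul_inv]
  · have h : Filter.Tendsto (fun ε : ℝ => ∫ t in Ioi (0:ℝ), (GG (t + ε * Complex.I)).re) (nhdsWithin 0 (Ioi 0))
        (nhds (∫ t in Ioi (0:ℝ), (GG t).re)) := by
      refine tendsto_integral_filter_of_dominated_convergence (fun t => C * (1 + t ^ 2)⁻¹) ?_ ?_
        (integrable_inv_one_add_sq.const_mul C).integrableOn ?_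
      · filter_upwards [self_mem_nhdsWithin] with ε hε
        exact (Complex.continuous_re.comp (GG_line_cont ε hε)).aestronglyMeasurable
      · filter_upwards [self_mem_nhdsWithin] with ε hε
        exact Filter.Eventually.of_forall fun t => (Complex.abs_re_le_norm _).trans (GG_line_bd C hC0 hC t ε hε)
      · filter_upwards [ae_restrict_mem measurableSet_Ioi] with t ht
        exact (Complex.continuous_re.tendsto _).comp (GG_lim t ht)
    refine tendsto_nhds_unique h ?_
    refine Filter.Tendsto.congr' ?_ tendsto_const_nhds
    filter_upwards [self_mem_nhdsWithin] with ε hε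
    exact (contour ε hε).symm

lemma int_IK : IntegrableOn (fun t : ℝ => I0 t * K0 t ^ 5 * t ^ 3) (Ioi 0) := by
  obtain ⟨B, hB0, hB⟩ := HH_bdd
  obtain ⟨C, hC0, hC⟩ := HH_asym
  have hm : Measurable (fun t : ℝ => I0 t * K0 t ^ 5 * t ^ 3) := by
    have := meas_K
    have := meas_I
    fun_prop
  refine Integrable.mono' (integrable_inv_one_add_sq.const_mul (B * B * C)).integrableOn hm.aestronglyMeasurable ?_
  filter_upwards [ae_restrict_mem measurableSet_Ioi] with t ht
  have ht : 0 < t := ht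
  have ht' : (t:ℂ) ≠ 0 := by exact_mod_cast ht.ne'
  have hv := HH_val t ht
  have hre : (HH t).re = 2 * t * (π * I0 t * K0 t) := by rw [hv]; simp [pow_two]
  have him : (HH t).im = - (2 * t * K0 t ^ 2) := by rw [hv]; simp [pow_two]
  have h1 := (Complex.abs_re_le_norm (HH t)).trans (hB t ht')
  have h2 := (Complex.abs_im_le_norm (HH t)).trans (hB t ht')
  have h3 := (Complex.abs_im_le_norm (HH t - π)).trans (hC t ht')
  rw [Complex.sub_im, Complex.ofReal_im, sub_zero] at h3
  rw [Complex.norm_real, Real.norm_eq_abs, sq_abs, div_eq_mul_inv] at h3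
  have e : I0 t * K0 t ^ 5 * t ^ 3 = (8 * π)⁻¹ * ((HH t).re * (HH t).im * (HH t).im) := by
    rw [hre, him]; field_simp; ring
  rw [e, Real.norm_eq_abs, abs_mul, abs_mul, abs_mul, abs_of_pos (by positivity : 0 < (8 * π)⁻¹)]
  have hpi : (8 * π)⁻¹ ≤ 1 := inv_le_one_of_one_le₀ (by linarith [Real.pi_gt_three])
  calc _ ≤ 1 * (B * B * (C * (1 + t ^ 2)⁻¹)) := by gcongr
    _ = _ := by ring

theorem IKM153_alternative :
    (∫ t in Ioi (0:ℝ), I0 t * (K0 t)^5 * t^3)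
    = (π^2/3) * ∫ t in Ioi (0:ℝ),
        I0 t * K0 t * ((I0 t)^2 * (K0 t)^2 - 1/(4*t^2)) * t^3 := by
  obtain ⟨hi, h0⟩ := int_GG
  have h1 := int_IK
  have e : ∀ t ∈ Ioi (0:ℝ), I0 t * K0 t * ((I0 t)^2 * (K0 t)^2 - 1/(4*t^2)) * t^3 =
      (3 / π ^ 2) * (I0 t * K0 t ^ 5 * t ^ 3) - (8 * π ^ 3)⁻¹ * (GG t).re := by
    intro t ht
    rw [GG_val t ht]
    field_simp
    ring
  rw [setIntegral_congr_fun measurableSet_Ioi e, integral_sub (h1.const_mul _) (hi.const_mul _),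
    integral_const_mul, integral_const_mul, h0]
  field_simp
  ring
end

section
/- ∫₀^∞ I₀(t)[K₀(t)]⁵ t⁵ dt = (π²/3)·∫₀^∞ I₀(t)K₀(t)·( [I₀(t)]²[K₀(t)]² − 1/(4t²) − 1/(16t⁴) )·t⁵ dt. -/
open Real MeasureTheory Set

open Filter Topology

noncomputable def rr (w : ℝ) : ℝ := (√(1 + w ^ 2))⁻¹

lemma rr_pos (w : ℝ) : 0 < rr w := by unfold rr; positivity

lemma rr_sq (w : ℝ) : rr w ^ 2 = (1 + w ^ 2)⁻¹ := by
  unfold rr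
  rw [inv_pow, Real.sq_sqrt (by positivity)]

lemma rr_le_one (w : ℝ) : rr w ≤ 1 := by
  have h := rr_sq w
  have h2 : (1 + w ^ 2)⁻¹ ≤ 1 := inv_le_one_of_one_le₀ (by nlinarith [sq_nonneg w])
  nlinarith [rr_pos w]

lemma abs_mul_rr_le (w : ℝ) : |w * rr w| ≤ 1 := by
  have h : (w * rr w) ^ 2 ≤ 1 := by
    rw [mul_pow, rr_sq, ← div_eq_mul_inv, div_le_one (by positivity)]
    linarith
  exact (sq_le_one_iff_abs_le_one _).1 h

lemma rr_hasDeriv (w : ℝ) : HasDerivAt rr (-(w * rr w ^ 3)) w := by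
  have h1 : HasDerivAt (fun x : ℝ => 1 + x ^ 2) (2 * w) w := by
    simpa using (hasDerivAt_pow 2 w).const_add 1
  have h2 := (h1.sqrt (by positivity)).inv (by positivity)
  refine HasDerivAt.congr_deriv h2 ?_
  unfold rr
  have : 0 < √(1 + w ^ 2) := by positivity
  field_simp

lemma rr_cont : Continuous rr :=
  continuous_iff_continuousAt.2 fun w => (rr_hasDeriv w).continuousAt

lemma rr_mono_int (a c : ℕ) : Integrable (fun w : ℝ => w ^ a * rr w ^ (a + 2 + c)) := by
  refine integrable_inv_one_add_sq.mono' ?_ ?_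
  · exact ((continuous_id.pow a).mul (rr_cont.pow _)).aestronglyMeasurable
  · refine Eventually.of_forall fun w => ?_
    have e : w ^ a * rr w ^ (a + 2 + c) = (w * rr w) ^ a * rr w ^ c * rr w ^ 2 := by ring
    rw [e, rr_sq, norm_mul, norm_mul, norm_pow, norm_pow, Real.norm_eq_abs, Real.norm_eq_abs,
      Real.norm_eq_abs, abs_of_pos (rr_pos w), abs_of_pos (show 0 < (1 + w ^ 2)⁻¹ by positivity)]
    have h1 : |w * rr w| ^ a ≤ 1 := pow_le_one₀ (abs_nonneg _) (abs_mul_rr_le w)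
    have h2 : rr w ^ c ≤ 1 := pow_le_one₀ (rr_pos w).le (rr_le_one w)
    have h3 : |w * rr w| ^ a * rr w ^ c ≤ 1 := mul_le_one₀ h1 (pow_nonneg (rr_pos w).le _) h2
    exact mul_le_of_le_one_left (by positivity) h3

noncomputable def g1 (w : ℝ) : ℝ := -(w ^ 1 * rr w ^ 3)
noncomputable def g2 (w : ℝ) : ℝ := 3 * (w ^ 2 * rr w ^ 5) - w ^ 0 * rr w ^ 3
noncomputable def g3 (w : ℝ) : ℝ := 9 * (w ^ 1 * rr w ^ 5) - 15 * (w ^ 3 * rr w ^ 7)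
noncomputable def g4 (w : ℝ) : ℝ :=
  9 * (w ^ 0 * rr w ^ 5) - 90 * (w ^ 2 * rr w ^ 7) + 105 * (w ^ 4 * rr w ^ 9)
noncomputable def g5 (w : ℝ) : ℝ :=
  -225 * (w ^ 1 * rr w ^ 7) + 1050 * (w ^ 3 * rr w ^ 9) - 945 * (w ^ 5 * rr w ^ 11)

lemma mono_hasDeriv (a b : ℕ) (w : ℝ) : HasDerivAt (fun w : ℝ => w ^ a * rr w ^ b)
    (a * w ^ (a - 1) * rr w ^ b + w ^ a * (b * rr w ^ (b - 1) * (-(w * rr w ^ 3)))) w :=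
  (hasDerivAt_pow a w).mul ((rr_hasDeriv w).pow b)

lemma g1_d (w : ℝ) : HasDerivAt g1 (g2 w) w := by
  refine HasDerivAt.congr_deriv ((mono_hasDeriv 1 3 w).neg) ?_
  simp [g2]; ring
lemma g2_d (w : ℝ) : HasDerivAt g2 (g3 w) w := by
  refine HasDerivAt.congr_deriv (((mono_hasDeriv 2 5 w).const_mul 3).sub (mono_hasDeriv 0 3 w)) ?_
  simp [g3]; ring
lemma g3_d (w : ℝ) : HasDerivAt g3 (g4 w) w := by
  refine HasDerivAt.congr_deriv (((mono_hasDeriv 1 5 w).const_mul 9).sub ((mono_hasDeriv 3 7 w).const_mul 15)) ?_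
  simp [g4]; ring
lemma g4_d (w : ℝ) : HasDerivAt g4 (g5 w) w := by
  refine HasDerivAt.congr_deriv ((((mono_hasDeriv 0 5 w).const_mul 9).sub ((mono_hasDeriv 2 7 w).const_mul 90)).add
    ((mono_hasDeriv 4 9 w).const_mul 105)) ?_
  simp [g5]; ring

lemma g1_int : Integrable g1 := (rr_mono_int 1 0).neg
lemma g2_int : Integrable g2 := ((rr_mono_int 2 1).const_mul 3).sub (rr_mono_int 0 1)
lemma g3_int : Integrable g3 := ((rr_mono_int 1 2).const_mul 9).sub ((rr_mono_int 3 2).const_mul 15)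
lemma g4_int : Integrable g4 := (((rr_mono_int 0 3).const_mul 9).sub
  ((rr_mono_int 2 3).const_mul 90)).add ((rr_mono_int 4 3).const_mul 105)
lemma g5_int : Integrable g5 := (((rr_mono_int 1 4).const_mul (-225)).add
  ((rr_mono_int 3 4).const_mul 1050)).sub ((rr_mono_int 5 4).const_mul 945)

/-- Half-line Fourier-Laplace transform. -/
noncomputable def JJ (G : ℝ → ℝ) (x : ℂ) : ℂ :=
  ∫ w in Ioi (0:ℝ), Complex.exp (Complex.I * x * w) * (G w : ℂ)

lemma norm_exp_le {x : ℂ} (hx : 0 ≤ x.im) {w : ℝ} (hw : 0 ≤ w) :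
    ‖Complex.exp (Complex.I * x * w)‖ ≤ 1 := by
  rw [Complex.norm_exp]
  simp only [Complex.mul_re, Complex.I_re, Complex.I_im, Complex.ofReal_re, Complex.ofReal_im,
    Complex.mul_im]
  rw [Real.exp_le_one_iff]
  nlinarith [mul_nonneg hx hw]

lemma JJ_integrable {G : ℝ → ℝ} (hG : Integrable G) {x : ℂ} (hx : 0 ≤ x.im) :
    IntegrableOn (fun w : ℝ => Complex.exp (Complex.I * x * w) * (G w : ℂ)) (Ioi 0) := by
  refine Integrable.mono' (hG.norm.integrableOn) ?_ ?_
  · refine AEStronglyMeasurable.mul ?_ ?_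
    · exact Continuous.aestronglyMeasurable (by fun_prop)
    · exact (Complex.continuous_ofReal.comp_aestronglyMeasurable hG.1).restrict
  · filter_upwards [ae_restrict_mem measurableSet_Ioi] with w hw
    rw [norm_mul]
    have := norm_exp_le hx (le_of_lt hw)
    simpa using mul_le_mul_of_nonneg_right this (norm_nonneg ((G w : ℂ)))

lemma JJ_bound {G : ℝ → ℝ} (hG : Integrable G) {x : ℂ} (hx : 0 ≤ x.im) :
    ‖JJ G x‖ ≤ ∫ w in Ioi (0:ℝ), ‖G w‖ := by
  refine norm_integral_le_of_norm_le hG.norm.integrableOn ?_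
  filter_upwards [ae_restrict_mem measurableSet_Ioi] with w hw
  rw [norm_mul]
  have := norm_exp_le hx (le_of_lt hw)
  simpa using mul_le_mul_of_nonneg_right this (norm_nonneg ((G w : ℂ)))

lemma JJ_ibp {G G' : ℝ → ℝ} (hd : ∀ w, HasDerivAt G (G' w) w) (hG : Integrable G)
    (hG' : Integrable G') {x : ℂ} (hx : 0 ≤ x.im) :
    Complex.I * x * JJ G x = -(G 0 : ℂ) - JJ G' x := by
  have hder : ∀ w : ℝ, HasDerivAt (fun w : ℝ => Complex.exp (Complex.I * x * w) * (G w : ℂ))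
      (Complex.I * x * (Complex.exp (Complex.I * x * w) * (G w : ℂ))
        + Complex.exp (Complex.I * x * w) * (G' w : ℂ)) w := by
    intro w
    have h1 : HasDerivAt (fun w : ℝ => Complex.I * x * (w : ℂ)) (Complex.I * x) w := by
      simpa using (Complex.ofRealCLM.hasDerivAt (x := w)).const_mul (Complex.I * x)
    have h2 := h1.cexp.mul (hd w).ofReal_comp
    refine HasDerivAt.congr_deriv h2 ?_
    ring
  have i1 := JJ_integrable hG hx
  have i2 := JJ_integrable hG' hx
  have i3 : IntegrableOn (fun w : ℝ => Complex.I * x * (Complex.exp (Complex.I * x * w) * (G w : ℂ))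
        + Complex.exp (Complex.I * x * w) * (G' w : ℂ)) (Ioi 0) :=
    (i1.const_mul (Complex.I * x)).add i2
  have ht := tendsto_zero_of_hasDerivAt_of_integrableOn_Ioi (fun w _ => hder w) i3 i1
  have h := integral_Ioi_of_hasDerivAt_of_tendsto' (fun w _ => hder w) i3 ht
  rw [integral_add (i1.const_mul (Complex.I * x)) i2, integral_const_mul] at h
  simp only [Complex.ofReal_zero, mul_zero, Complex.exp_zero, one_mul] at h
  unfold JJ
  linear_combination h

noncomputable def MM (x : ℂ) : ℂ := Complex.I * (1 + JJ g1 x)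

lemma rr_zero : rr 0 = 1 := by simp [rr]

lemma MM_asymp : ∃ C : ℝ, 0 ≤ C ∧ ∀ x : ℂ, 0 ≤ x.im → x ≠ 0 →
    ‖MM x - Complex.I * (1 + 1 / x ^ 2)‖ ≤ C / ‖x‖ ^ 4 := by
  refine ⟨‖(g4 0 : ℂ)‖ + ∫ w in Ioi (0:ℝ), ‖g5 w‖, by positivity, fun x hx h0 => ?_⟩
  have e1 := JJ_ibp g1_d g1_int g2_int hx
  have e2 := JJ_ibp g2_d g2_int g3_int hx
  have e3 := JJ_ibp g3_d g3_int g4_int hx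
  have e4 := JJ_ibp g4_d g4_int g5_int hx
  have v1 : g1 0 = 0 := by simp [g1]
  have v2 : g2 0 = -1 := by simp [g2, rr_zero]
  have v3 : g3 0 = 0 := by simp [g3]
  rw [v1] at e1
  rw [v2] at e2
  rw [v3] at e3
  have key : MM x - Complex.I * (1 + 1 / x ^ 2) = Complex.I * ((g4 0 : ℂ) + JJ g5 x) / x ^ 4 := by
    unfold MM
    have hI : Complex.I ^ 2 = -1 := Complex.I_sq
    push_cast at *
    have h1 : x * JJ g1 x = Complex.I * JJ g2 x := by
      linear_combination (-Complex.I) * e1 + x * JJ g1 x * hI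
    have h2 : x * JJ g2 x = -Complex.I + Complex.I * JJ g3 x := by
      linear_combination (-Complex.I) * e2 + x * JJ g2 x * hI
    have h3 : x * JJ g3 x = Complex.I * JJ g4 x := by
      linear_combination (-Complex.I) * e3 + x * JJ g3 x * hI
    have h4 : x * JJ g4 x = Complex.I * ((g4 0 : ℂ) + JJ g5 x) := by
      linear_combination (-Complex.I) * e4 + x * JJ g4 x * hI
    have h5 : x ^ 4 * JJ g1 x = x ^ 2 + ((g4 0 : ℂ) + JJ g5 x) := by
      linear_combination x ^ 3 * h1 + Complex.I * x ^ 2 * h2 + Complex.I ^ 2 * x * h3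
        + Complex.I ^ 3 * h4 + (- x ^ 2 + (Complex.I ^ 2 - 1) * ((g4 0 : ℂ) + JJ g5 x)) * hI
    field_simp
    linear_combination h5
  rw [key, norm_div, norm_mul, Complex.norm_I, one_mul, norm_pow]
  gcongr
  refine (norm_add_le _ _).trans ?_
  gcongr
  exact JJ_bound g5_int hx

lemma MM_bound : ∃ C : ℝ, 0 ≤ C ∧ ∀ x : ℂ, 0 ≤ x.im → ‖MM x‖ ≤ C := by
  refine ⟨1 + ∫ w in Ioi (0:ℝ), ‖g1 w‖, by positivity, fun x hx => ?_⟩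
  unfold MM
  rw [norm_mul, Complex.norm_I, one_mul]
  refine (norm_add_le _ _).trans ?_
  rw [norm_one]
  gcongr
  exact JJ_bound g1_int hx

lemma MM_cont : ContinuousOn MM {x : ℂ | 0 ≤ x.im} := by
  unfold MM
  refine continuousOn_const.mul (continuousOn_const.add ?_)
  unfold JJ
  refine continuousOn_of_dominated (bound := fun w => ‖g1 w‖) ?_ ?_ g1_int.norm.integrableOn ?_
  · intro x hx
    exact (JJ_integrable g1_int hx).1
  · intro x hx
    filter_upwards [ae_restrict_mem measurableSet_Ioi] with w hw
    rw [norm_mul]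
    have := norm_exp_le hx (le_of_lt hw)
    simpa using mul_le_mul_of_nonneg_right this (norm_nonneg ((g1 w : ℂ)))
  · refine Eventually.of_forall fun w => ?_
    fun_prop

noncomputable def MMd (x : ℂ) : ℂ :=
  Complex.I * ∫ w in Ioi (0:ℝ), Complex.I * w * (Complex.exp (Complex.I * x * w) * (g1 w : ℂ))

lemma wg1_le (w : ℝ) : ‖w * g1 w‖ ≤ 1 := by
  have e : w * g1 w = - ((w * rr w) ^ 2 * rr w) := by unfold g1; ring
  rw [e, norm_neg, norm_mul, norm_pow, Real.norm_eq_abs, Real.norm_eq_abs, abs_of_pos (rr_pos w)]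
  exact mul_le_one₀ (pow_le_one₀ (abs_nonneg _) (abs_mul_rr_le w)) (rr_pos w).le (rr_le_one w)

lemma MMd_pt {x : ℂ} {c : ℝ} (hx : c ≤ x.im) {w : ℝ} (hw : 0 < w) :
    ‖Complex.I * w * (Complex.exp (Complex.I * x * w) * (g1 w : ℂ))‖ ≤ Real.exp (-c * w) := by
  have e : Complex.I * w * (Complex.exp (Complex.I * x * w) * (g1 w : ℂ))
      = Complex.I * Complex.exp (Complex.I * x * w) * ((w * g1 w : ℝ) : ℂ) := by
    push_cast; ring
  rw [e, norm_mul, norm_mul, Complex.norm_I, one_mul, Complex.norm_real, Complex.norm_exp]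
  simp only [Complex.mul_re, Complex.I_re, Complex.I_im, Complex.ofReal_re, Complex.ofReal_im,
    Complex.mul_im]
  refine (mul_le_of_le_one_right (Real.exp_pos _).le (wg1_le w)).trans ?_
  rw [Real.exp_le_exp]
  nlinarith

lemma exp_int {c : ℝ} (hc : 0 < c) : IntegrableOn (fun w : ℝ => Real.exp (-c * w)) (Ioi 0) :=
  exp_neg_integrableOn_Ioi 0 hc

lemma MMd_bound {x : ℂ} (hx : 0 < x.im) : ‖MMd x‖ ≤ 1 / x.im := by
  unfold MMd
  rw [norm_mul, Complex.norm_I, one_mul]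
  have h := norm_integral_le_of_norm_le (μ := volume.restrict (Ioi (0:ℝ)))
    (f := fun w : ℝ => Complex.I * w * (Complex.exp (Complex.I * x * w) * (g1 w : ℂ)))
    (exp_int hx) (by
      filter_upwards [ae_restrict_mem measurableSet_Ioi] with w hw
      exact MMd_pt le_rfl hw)
  refine h.trans (le_of_eq ?_)
  have := integral_exp_mul_Ioi (a := -x.im) (by linarith) 0
  rw [this]; simp [neg_div]

lemma MM_deriv {x : ℂ} (hx : 0 < x.im) : HasDerivAt MM (MMd x) x := by
  unfold MM MMd
  refine HasDerivAt.const_mul _ (HasDerivAt.const_add _ ?_)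
  unfold JJ
  have hs : {y : ℂ | x.im / 2 < y.im} ∈ 𝓝 x :=
    (isOpen_lt continuous_const Complex.continuous_im).mem_nhds (by simp; linarith)
  have gm : AEStronglyMeasurable (fun w : ℝ => (g1 w : ℂ)) (volume.restrict (Ioi 0)) :=
    (Complex.continuous_ofReal.comp_aestronglyMeasurable g1_int.1).restrict
  refine (hasDerivAt_integral_of_dominated_loc_of_deriv_le
    (F := fun (x : ℂ) (w : ℝ) => Complex.exp (Complex.I * x * w) * (g1 w : ℂ))
    (F' := fun (x : ℂ) (w : ℝ) => Complex.I * w * (Complex.exp (Complex.I * x * w) * (g1 w : ℂ)))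
    (μ := volume.restrict (Ioi 0))
    (bound := fun w => Real.exp (-(x.im/2) * w)) hs ?_ ?_ ?_ ?_ ?_ ?_).2
  · filter_upwards [hs] with y hy
    have hy' : x.im / 2 < y.im := hy
    exact (JJ_integrable g1_int (by linarith)).1
  · exact JJ_integrable g1_int hx.le
  · refine AEStronglyMeasurable.mul (Continuous.aestronglyMeasurable (by fun_prop)) (AEStronglyMeasurable.mul (Continuous.aestronglyMeasurable (by fun_prop)) gm)
  · filter_upwards [ae_restrict_mem measurableSet_Ioi] with w hw y hy
    exact MMd_pt (le_of_lt hy) hw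
  · exact exp_int (by linarith)
  · refine Eventually.of_forall fun w y _ => ?_
    have h1 : HasDerivAt (fun y : ℂ => Complex.I * y * (w : ℂ)) (Complex.I * w) y := by
      simpa using ((hasDerivAt_id y).const_mul Complex.I).mul_const (w : ℂ)
    refine HasDerivAt.congr_deriv (h1.cexp.mul_const (g1 w : ℂ)) ?_
    ring

open Filter Topology

lemma cosh_ge (v : ℝ) : Real.exp v / 2 ≤ Real.cosh v := by
  rw [Real.cosh_eq]; linarith [Real.exp_pos (-v)]

lemma inv_cosh_le (v : ℝ) : (Real.cosh v)⁻¹ ≤ 2 * Real.exp (-1 * v) := by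
  have h := cosh_ge v
  have h2 := Real.exp_pos v
  rw [inv_le_comm₀ (Real.cosh_pos v) (by positivity)]
  refine le_trans (le_of_eq ?_) h
  rw [neg_one_mul, Real.exp_neg]
  field_simp

lemma sech_pow_int (n : ℕ) : IntegrableOn (fun v => (Real.cosh v)⁻¹ ^ (n + 1)) (Ioi 0) := by
  refine Integrable.mono' ((exp_int one_pos).const_mul 2) ?_ ?_
  · refine Continuous.aestronglyMeasurable ?_
    exact (Real.continuous_cosh.inv₀ fun v => (Real.cosh_pos v).ne').pow _
  · refine Eventually.of_forall fun v => ?_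
    have h1 : 0 < (Real.cosh v)⁻¹ := inv_pos.2 (Real.cosh_pos v)
    have h2 : (Real.cosh v)⁻¹ ≤ 1 := inv_le_one_of_one_le₀ (Real.one_le_cosh v)
    rw [Real.norm_eq_abs, abs_of_pos (by positivity), pow_succ]
    exact (mul_le_of_le_one_left h1.le (pow_le_one₀ h1.le h2)).trans (inv_cosh_le v)

lemma sech_int : IntegrableOn (fun v => (Real.cosh v)⁻¹) (Ioi 0) := by
  simpa using sech_pow_int 0

lemma sinh_tendsto : Tendsto Real.sinh atTop atTop := by
  refine tendsto_atTop_mono' _ ?_ tendsto_id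
  filter_upwards [eventually_ge_atTop 0] with x hx
  exact Real.self_le_sinh_iff.2 hx

lemma cosh_tendsto : Tendsto Real.cosh atTop atTop :=
  tendsto_atTop_mono (fun x => (Real.sinh_lt_cosh x).le) sinh_tendsto

lemma atan_sinh_tendsto : Tendsto (fun v => Real.arctan (Real.sinh v)) atTop (𝓝 (π / 2)) :=
  (Real.tendsto_arctan_atTop.mono_right nhdsWithin_le_nhds).comp sinh_tendsto

lemma atan_sinh_d (v : ℝ) : HasDerivAt (fun v => Real.arctan (Real.sinh v)) (Real.cosh v)⁻¹ v := by
  refine (Real.hasDerivAt_sinh v).arctan.congr_deriv ?_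
  have := Real.cosh_sq v
  have h := Real.cosh_pos v
  rw [show 1 + Real.sinh v ^ 2 = Real.cosh v ^ 2 by linarith]
  field_simp

lemma sech_integral : ∫ v in Ioi (0:ℝ), (Real.cosh v)⁻¹ = π / 2 := by
  have h := integral_Ioi_of_hasDerivAt_of_tendsto' (a := 0) (fun v _ => atan_sinh_d v) sech_int
    atan_sinh_tendsto
  simpa using h

lemma sech3_integral : ∫ v in Ioi (0:ℝ), (Real.cosh v)⁻¹ ^ 3 = π / 4 := by
  have hd : ∀ v : ℝ, HasDerivAt (fun v => (1/2 : ℝ) * (Real.sinh v / Real.cosh v ^ 2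
      + Real.arctan (Real.sinh v))) ((Real.cosh v)⁻¹ ^ 3) v := by
    intro v
    have h0 := (Real.cosh_pos v).ne'
    refine ((((Real.hasDerivAt_sinh v).div ((Real.hasDerivAt_cosh v).pow 2)
      (pow_ne_zero 2 h0)).add (atan_sinh_d v)).const_mul (1/2 : ℝ)).congr_deriv ?_
    have := Real.cosh_sq v
    simp only [Pi.pow_apply]
    field_simp
    push_cast
    simp only [pow_one]
    have h2 : Real.sinh v ^ 2 = Real.cosh v ^ 2 - 1 := by linarith
    ring_nf
    simp only [h2]
    ring
  have ht : Tendsto (fun v => (1/2 : ℝ) * (Real.sinh v / Real.cosh v ^ 2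
      + Real.arctan (Real.sinh v))) atTop (𝓝 ((1/2 : ℝ) * (0 + π / 2))) := by
    refine (Tendsto.add ?_ atan_sinh_tendsto).const_mul _
    have h1 : Tendsto (fun v => (Real.cosh v)⁻¹) atTop (𝓝 0) := cosh_tendsto.inv_tendsto_atTop
    refine squeeze_zero_norm (fun v => ?_) h1
    have h0 := Real.cosh_pos v
    rw [norm_div, Real.norm_eq_abs, Real.norm_eq_abs, abs_of_pos (by positivity : 0 < Real.cosh v ^ 2),
      div_le_iff₀ (by positivity)]
    have : |Real.sinh v| ≤ Real.cosh v :=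
      abs_le.2 ⟨by linarith [Real.sinh_lt_cosh (-v), Real.sinh_neg v, Real.cosh_neg v], (Real.sinh_lt_cosh v).le⟩
    field_simp
    exact this
  have h := integral_Ioi_of_hasDerivAt_of_tendsto' (a := 0) (fun v _ => hd v) (sech_pow_int 2) ht
  rw [h]; simp; ring

noncomputable def WW (z : ℂ) : ℂ :=
  ∫ v in Ioi (0:ℝ), MM (2 * z * (Real.cosh v : ℂ)) * ((Real.cosh v)⁻¹ : ℝ)

lemma im_arg (z : ℂ) (v : ℝ) : (2 * z * (Real.cosh v : ℂ)).im = 2 * Real.cosh v * z.im := by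
  simp only [Complex.mul_im, Complex.mul_re, Complex.ofReal_re, Complex.ofReal_im]
  simp; ring

lemma im_arg_nonneg {z : ℂ} (hz : 0 ≤ z.im) (v : ℝ) : 0 ≤ (2 * z * (Real.cosh v : ℂ)).im := by
  rw [im_arg]; have := Real.cosh_pos v; positivity

lemma im_arg_pos {z : ℂ} (hz : 0 < z.im) (v : ℝ) : 0 < (2 * z * (Real.cosh v : ℂ)).im := by
  rw [im_arg]; have := Real.cosh_pos v; positivity

lemma isech_cont : Continuous fun v : ℝ => (((Real.cosh v)⁻¹ : ℝ) : ℂ) :=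
  Complex.continuous_ofReal.comp (Real.continuous_cosh.inv₀ fun v => (Real.cosh_pos v).ne')

lemma ccosh_cont : Continuous fun v : ℝ => ((Real.cosh v : ℝ) : ℂ) :=
  Complex.continuous_ofReal.comp Real.continuous_cosh

lemma MMc_cont {z : ℂ} (hz : 0 ≤ z.im) :
    Continuous (fun v : ℝ => MM (2 * z * (Real.cosh v : ℂ)) * ((Real.cosh v)⁻¹ : ℝ)) := by
  refine Continuous.mul ?_ isech_cont
  exact MM_cont.comp_continuous (continuous_const.mul ccosh_cont) (im_arg_nonneg hz)

lemma norm_isech (v : ℝ) : ‖(((Real.cosh v)⁻¹ : ℝ) : ℂ)‖ = (Real.cosh v)⁻¹ := by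
  rw [Complex.norm_real, Real.norm_eq_abs, abs_of_pos (inv_pos.2 (Real.cosh_pos v))]

lemma MMc_int {z : ℂ} (hz : 0 ≤ z.im) :
    IntegrableOn (fun v : ℝ => MM (2 * z * (Real.cosh v : ℂ)) * ((Real.cosh v)⁻¹ : ℝ)) (Ioi 0) := by
  obtain ⟨C, hC0, hC⟩ := MM_bound
  refine Integrable.mono' (sech_int.const_mul C) (MMc_cont hz).aestronglyMeasurable ?_
  refine Eventually.of_forall fun v => ?_
  rw [norm_mul, norm_isech]
  exact mul_le_mul_of_nonneg_right (hC _ (im_arg_nonneg hz v)) (inv_pos.2 (Real.cosh_pos v)).le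

lemma WW_bound : ∃ C : ℝ, 0 ≤ C ∧ ∀ z : ℂ, 0 ≤ z.im → ‖WW z‖ ≤ C := by
  obtain ⟨C, hC0, hC⟩ := MM_bound
  refine ⟨∫ v in Ioi (0:ℝ), C * (Real.cosh v)⁻¹, ?_, fun z hz => ?_⟩
  · exact integral_nonneg fun v => mul_nonneg hC0 (inv_pos.2 (Real.cosh_pos v)).le
  · refine norm_integral_le_of_norm_le (sech_int.const_mul C) ?_
    refine Eventually.of_forall fun v => ?_
    rw [norm_mul, norm_isech]
    exact mul_le_mul_of_nonneg_right (hC _ (im_arg_nonneg hz v)) (inv_pos.2 (Real.cosh_pos v)).le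

lemma WW_cont : ContinuousOn WW {z : ℂ | 0 ≤ z.im} := by
  obtain ⟨C, hC0, hC⟩ := MM_bound
  unfold WW
  refine continuousOn_of_dominated (bound := fun v => C * (Real.cosh v)⁻¹) ?_ ?_
    (sech_int.const_mul C) ?_
  · intro z hz
    exact (MMc_cont hz).aestronglyMeasurable
  · intro z hz
    refine Eventually.of_forall fun v => ?_
    rw [norm_mul, norm_isech]
    exact mul_le_mul_of_nonneg_right (hC _ (im_arg_nonneg hz v)) (inv_pos.2 (Real.cosh_pos v)).le
  · refine Eventually.of_forall fun v => ?_
    refine ContinuousOn.mul ?_ continuousOn_const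
    refine MM_cont.comp (by fun_prop) ?_
    intro z hz
    exact im_arg_nonneg hz v

lemma WW_diff {z : ℂ} (hz : 0 < z.im) : DifferentiableAt ℂ WW z := by
  have hs : {y : ℂ | z.im / 2 < y.im} ∈ 𝓝 z :=
    (isOpen_lt continuous_const Complex.continuous_im).mem_nhds (by simp; linarith)
  unfold WW
  have hd : ∀ (v : ℝ) (y : ℂ), 0 < y.im → HasDerivAt
      (fun y : ℂ => MM (2 * y * (Real.cosh v : ℂ)) * ((Real.cosh v)⁻¹ : ℝ))
      (2 * MMd (2 * y * (Real.cosh v : ℂ))) y := by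
    intro v y hy
    have h1 : HasDerivAt (fun y : ℂ => 2 * y * (Real.cosh v : ℂ)) (2 * (Real.cosh v : ℂ)) y := by
      simpa using ((hasDerivAt_id y).const_mul 2).mul_const (Real.cosh v : ℂ)
    have h2 := (HasDerivAt.comp y (MM_deriv (im_arg_pos hy v)) h1).mul_const (((Real.cosh v)⁻¹ : ℝ) : ℂ)
    refine HasDerivAt.congr_deriv h2 ?_
    have : ((Real.cosh v : ℝ) : ℂ) ≠ 0 := Complex.ofReal_ne_zero.2 (Real.cosh_pos v).ne'
    push_cast at *
    field_simp
  have hmeas : AEStronglyMeasurable (fun v : ℝ => 2 * MMd (2 * z * (Real.cosh v : ℂ)))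
      (volume.restrict (Ioi 0)) := by
    have hc : ContinuousOn MMd {x : ℂ | 0 < x.im} := by
      have ho : IsOpen {x : ℂ | 0 < x.im} := isOpen_lt continuous_const Complex.continuous_im
      have hD : DifferentiableOn ℂ MM {x : ℂ | 0 < x.im} := fun x hx =>
        (MM_deriv hx).differentiableAt.differentiableWithinAt
      refine (hD.deriv ho).continuousOn.congr fun x hx => ?_
      exact (MM_deriv hx).deriv.symm
    refine Continuous.aestronglyMeasurable (continuous_const.mul ?_)
    exact hc.comp_continuous (continuous_const.mul ccosh_cont) (im_arg_pos hz)
  refine (hasDerivAt_integral_of_dominated_loc_of_deriv_le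
    (F := fun (y : ℂ) (v : ℝ) => MM (2 * y * (Real.cosh v : ℂ)) * ((Real.cosh v)⁻¹ : ℝ))
    (F' := fun (y : ℂ) (v : ℝ) => 2 * MMd (2 * y * (Real.cosh v : ℂ)))
    (μ := volume.restrict (Ioi 0)) (x₀ := z)
    (bound := fun v => (2 / z.im) * (Real.cosh v)⁻¹) hs ?_ ?_ hmeas ?_ ?_ ?_).2.differentiableAt
  · filter_upwards [hs] with y hy
    have hy' : z.im / 2 < y.im := hy
    exact (MMc_cont (by linarith)).aestronglyMeasurable
  · exact MMc_int hz.le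
  · refine Eventually.of_forall fun v y hy => ?_
    have hy' : z.im / 2 < y.im := hy
    have hy0 : 0 < y.im := by linarith
    rw [norm_mul]
    have h := MMd_bound (im_arg_pos hy0 v)
    rw [im_arg] at h
    have hc := Real.cosh_pos v
    calc ‖(2:ℂ)‖ * ‖MMd (2 * y * (Real.cosh v : ℂ))‖ ≤ 2 * (1 / (2 * Real.cosh v * y.im)) := by
          simpa using h
      _ ≤ 2 * (1 / (2 * Real.cosh v * (z.im / 2))) := by gcongr
      _ = (2 / z.im) * (Real.cosh v)⁻¹ := by field_simp
  · exact sech_int.const_mul _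
  · refine Eventually.of_forall fun v y hy => ?_
    have hy' : z.im / 2 < y.im := hy
    exact hd v y (by linarith)

lemma WW_asymp : ∃ C : ℝ, 0 ≤ C ∧ ∀ z : ℂ, 0 ≤ z.im → z ≠ 0 →
    ‖WW z - Complex.I * (π / 2 + π / (16 * z ^ 2))‖ ≤ C / ‖z‖ ^ 4 := by
  obtain ⟨C, hC0, hC⟩ := MM_asymp
  refine ⟨C * (π / 2), by positivity, fun z hz h0 => ?_⟩
  have i1 : IntegrableOn (fun v => (((Real.cosh v)⁻¹ : ℝ) : ℂ)) (Ioi 0) := sech_int.ofReal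
  have i3 : IntegrableOn (fun v => (((Real.cosh v)⁻¹ ^ 3 : ℝ) : ℂ)) (Ioi 0) := (sech_pow_int 2).ofReal
  have i13 : IntegrableOn (fun v => Complex.I * (((Real.cosh v)⁻¹ : ℝ) : ℂ) +
      Complex.I / (4 * z ^ 2) * (((Real.cosh v)⁻¹ ^ 3 : ℝ) : ℂ)) (Ioi 0) :=
    (i1.const_mul Complex.I).add (i3.const_mul _)
  have e : Complex.I * ((π:ℂ) / 2 + π / (16 * z ^ 2)) = ∫ v in Ioi (0:ℝ),
      (Complex.I * (((Real.cosh v)⁻¹ : ℝ) : ℂ) +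
      Complex.I / (4 * z ^ 2) * (((Real.cosh v)⁻¹ ^ 3 : ℝ) : ℂ)) := by
    rw [integral_add (i1.const_mul Complex.I) (i3.const_mul _), integral_const_mul,
      integral_const_mul, integral_complex_ofReal, integral_complex_ofReal, sech_integral, sech3_integral]
    push_cast
    field_simp
    ring
  rw [e, WW, ← integral_sub (MMc_int hz) i13]
  have hb : ∫ v in Ioi (0:ℝ), C / ‖z‖ ^ 4 * (Real.cosh v)⁻¹ = C * (π / 2) / ‖z‖ ^ 4 := by
    rw [integral_const_mul, sech_integral]; ring
  rw [← hb]
  refine norm_integral_le_of_norm_le (sech_int.const_mul _) ?_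
  refine Eventually.of_forall fun v => ?_
  have hc := Real.cosh_pos v
  have hc1 := Real.one_le_cosh v
  have hcc : ((Real.cosh v : ℝ) : ℂ) ≠ 0 := Complex.ofReal_ne_zero.2 hc.ne'
  have hx0 : 2 * z * (Real.cosh v : ℂ) ≠ 0 := by
    simp only [ne_eq, mul_eq_zero, not_or]
    exact ⟨⟨two_ne_zero, h0⟩, hcc⟩
  have h := hC _ (im_arg_nonneg hz v) hx0
  have e2 : MM (2 * z * (Real.cosh v : ℂ)) * ((Real.cosh v)⁻¹ : ℝ) -
      (Complex.I * (((Real.cosh v)⁻¹ : ℝ) : ℂ) +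
      Complex.I / (4 * z ^ 2) * (((Real.cosh v)⁻¹ ^ 3 : ℝ) : ℂ))
      = (MM (2 * z * (Real.cosh v : ℂ)) - Complex.I * (1 + 1 / (2 * z * (Real.cosh v : ℂ)) ^ 2))
        * (((Real.cosh v)⁻¹ : ℝ) : ℂ) := by
    rw [Complex.ofReal_pow, Complex.ofReal_inv]
    generalize ((Real.cosh v : ℝ) : ℂ) = c at *
    field_simp
    ring
  simp only [e2]
  rw [norm_mul, norm_isech]
  refine mul_le_mul_of_nonneg_right (h.trans ?_) (inv_pos.2 hc).le
  have hz' : 0 < ‖z‖ := norm_pos_iff.2 h0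
  gcongr
  rw [norm_mul, norm_mul, Complex.norm_real, Real.norm_eq_abs, abs_of_pos hc]
  simp only [Complex.norm_ofNat]
  nlinarith

lemma JJ_conj (t : ℝ) : JJ g1 ((-t : ℝ) : ℂ) = (starRingEnd ℂ) (JJ g1 (t : ℂ)) := by
  unfold JJ
  rw [← integral_conj]
  congr 1
  ext w
  simp [← Complex.exp_conj]

lemma MM_conj (t : ℝ) : MM ((-t : ℝ) : ℂ) = - (starRingEnd ℂ) (MM (t : ℂ)) := by
  unfold MM
  rw [JJ_conj]
  simp

lemma WW_conj (t : ℝ) : WW ((-t : ℝ) : ℂ) = - (starRingEnd ℂ) (WW (t : ℂ)) := by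
  unfold WW
  rw [← integral_conj, ← integral_neg]
  congr 1
  ext v
  have e1 : (2 * ((-t : ℝ) : ℂ) * (Real.cosh v : ℂ)) = ((-(2 * t * Real.cosh v) : ℝ) : ℂ) := by
    push_cast; ring
  have e2 : (2 * ((t : ℝ) : ℂ) * (Real.cosh v : ℂ)) = ((2 * t * Real.cosh v : ℝ) : ℂ) := by
    push_cast; ring
  rw [e1, e2, MM_conj, map_mul, Complex.conj_ofReal]
  ring

open Filter Topology

noncomputable def QQ (z : ℂ) : ℂ :=
  z ^ 2 * WW z ^ 3 + π ^ 2 * WW z * (z ^ 2 / 4 + 1 / 16)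

lemma QQ_bound : ∃ C : ℝ, 0 ≤ C ∧ ∀ z : ℂ, 0 ≤ z.im → 1 ≤ ‖z‖ → ‖QQ z‖ ≤ C / ‖z‖ ^ 2 := by
  obtain ⟨B, hB0, hB⟩ := WW_bound
  obtain ⟨C, hC0, hC⟩ := WW_asymp
  refine ⟨B * (π ^ 2 / 256 + C * (B + π)), by positivity, fun z hz h1 => ?_⟩
  have hn : 0 < ‖z‖ := by linarith
  have h0 : z ≠ 0 := norm_pos_iff.1 hn
  set A : ℂ := (π / 2 + π / (16 * z ^ 2) : ℂ) with hA
  set E : ℂ := WW z - Complex.I * A with hE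
  have hEb : ‖E‖ ≤ C / ‖z‖ ^ 4 := hC z hz h0
  have hAb : ‖A‖ ≤ π := by
    refine (norm_add_le _ _).trans ?_
    rw [norm_div, norm_div, norm_mul, norm_pow, Complex.norm_real, Real.norm_eq_abs,
      abs_of_pos Real.pi_pos]
    simp only [Complex.norm_ofNat]
    have : π / (16 * ‖z‖ ^ 2) ≤ π / 2 := by
      gcongr
      nlinarith
    linarith
  have e : QQ z = z ^ 2 * WW z * (-(π ^ 2 / 256) / z ^ 4 + E * (WW z + Complex.I * A)) := by
    have hW : WW z = E + Complex.I * A := by rw [hE]; ring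
    have : WW z ^ 2 + π ^ 2 / 4 + π ^ 2 / (16 * z ^ 2)
        = -(π ^ 2 / 256) / z ^ 4 + E * (WW z + Complex.I * A) := by
      have h2 : E * (WW z + Complex.I * A) = WW z ^ 2 + A ^ 2 := by
        rw [hE]; linear_combination -A ^ 2 * Complex.I_sq
      rw [h2, hA]
      field_simp
      ring
    rw [← this]
    unfold QQ
    field_simp
    ring
  rw [e, norm_mul, norm_mul, norm_pow]
  have h3 : ‖-(π ^ 2 / 256 : ℂ) / z ^ 4 + E * (WW z + Complex.I * A)‖
      ≤ (π ^ 2 / 256 + C * (B + π)) / ‖z‖ ^ 4 := by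
    refine (norm_add_le _ _).trans ?_
    rw [norm_div, norm_neg, norm_mul, norm_pow, add_div]
    refine add_le_add (le_of_eq ?_) ?_
    · rw [norm_div, norm_pow, Complex.norm_real, Real.norm_eq_abs, abs_of_pos Real.pi_pos]
      simp
    · have : ‖WW z + Complex.I * A‖ ≤ B + π := by
        refine (norm_add_le _ _).trans ?_
        rw [norm_mul, Complex.norm_I, one_mul]
        exact add_le_add (hB z hz) hAb
      calc ‖E‖ * ‖WW z + Complex.I * A‖ ≤ C / ‖z‖ ^ 4 * (B + π) := by gcongr
        _ = _ := by ring
  calc ‖z‖ ^ 2 * ‖WW z‖ * _ ≤ ‖z‖ ^ 2 * B * ((π ^ 2 / 256 + C * (B + π)) / ‖z‖ ^ 4) := by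
        gcongr
        exact hB z hz
    _ = _ := by field_simp

lemma QQ_cont : ContinuousOn QQ {z : ℂ | 0 ≤ z.im} := by
  have := WW_cont
  unfold QQ
  fun_prop

lemma QQ_diff {z : ℂ} (hz : 0 < z.im) : DifferentiableAt ℂ QQ z := by
  have := WW_diff hz
  unfold QQ
  fun_prop

lemma QQ_conj (t : ℝ) : QQ ((-t : ℝ) : ℂ) = - (starRingEnd ℂ) (QQ (t : ℂ)) := by
  unfold QQ
  rw [WW_conj]
  have h4 : (starRingEnd ℂ) 4 = 4 := Complex.conj_ofNat 4
  have h16 : (starRingEnd ℂ) 16 = 16 := Complex.conj_ofNat 16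
  simp [h4, h16]
  ring

lemma ofReal_cont_QQ : Continuous fun t : ℝ => QQ (t : ℂ) :=
  QQ_cont.comp_continuous Complex.continuous_ofReal (by simp)

lemma ofReal_cont_WW : Continuous fun t : ℝ => WW (t : ℂ) :=
  WW_cont.comp_continuous Complex.continuous_ofReal (by simp)

lemma QQ_integral_tendsto :
    Tendsto (fun R : ℝ => ∫ x in (-R)..R, QQ (x : ℂ)) atTop (𝓝 0) := by
  obtain ⟨C, hC0, hC⟩ := QQ_bound
  have hlim : Tendsto (fun R : ℝ => 4 * C / R) atTop (𝓝 0) :=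
    tendsto_const_nhds.div_atTop tendsto_id
  refine squeeze_zero_norm' ?_ hlim
  filter_upwards [eventually_ge_atTop 1] with R hR
  have hR0 : 0 < R := by linarith
  have hrect := Complex.integral_boundary_rect_eq_zero_of_continuousOn_of_differentiableOn QQ
    ((-R : ℝ) : ℂ) ((R : ℂ) + R * Complex.I) (by
      refine QQ_cont.mono ?_
      intro z hz
      have := hz.2
      simp [uIcc_of_le hR0.le] at this
      exact this.1) (by
      intro z hz
      have := hz.2
      simp [hR0.le] at this
      exact (QQ_diff this.1).differentiableWithinAt)
  simp only [Complex.ofReal_re, Complex.ofReal_im, Complex.add_re, Complex.add_im, Complex.mul_re,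
    Complex.mul_im, Complex.I_re, Complex.I_im, mul_zero, mul_one, zero_mul, sub_zero, add_zero,
    zero_add, Complex.ofReal_zero] at hrect
  have b1 : ‖∫ x in (-R)..R, QQ ((x : ℂ) + R * Complex.I)‖ ≤ C / R ^ 2 * |R - (-R)| := by
    refine intervalIntegral.norm_integral_le_of_norm_le_const fun x _ => ?_
    have him : ((x : ℂ) + R * Complex.I).im = R := by simp
    have hn : R ≤ ‖(x : ℂ) + R * Complex.I‖ := by
      have := Complex.abs_im_le_norm ((x : ℂ) + R * Complex.I)
      rw [him, abs_of_pos hR0] at this; exact this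
    refine (hC _ (by rw [him]; exact hR0.le) (by linarith)).trans ?_
    gcongr
  have bv : ∀ s : ℝ, |s| = R → ‖∫ y in (0:ℝ)..R, QQ ((s : ℂ) + y * Complex.I)‖ ≤ C / R ^ 2 * |R - 0| := by
    intro s hs
    refine intervalIntegral.norm_integral_le_of_norm_le_const fun y hy => ?_
    rw [uIoc_of_le hR0.le] at hy
    have him : ((s : ℂ) + y * Complex.I).im = y := by simp
    have hn : R ≤ ‖(s : ℂ) + y * Complex.I‖ := by
      have := Complex.abs_re_le_norm ((s : ℂ) + y * Complex.I)
      simp only [Complex.add_re, Complex.ofReal_re, Complex.mul_re, Complex.I_re, mul_zero,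
        Complex.ofReal_im, Complex.I_im, mul_one, sub_zero, add_zero] at this
      rw [hs] at this; exact this
    refine (hC _ (by rw [him]; exact hy.1.le) (by linarith)).trans ?_
    gcongr
  have b2 := bv R (abs_of_pos hR0)
  have b3 := bv (-R) (by rw [abs_neg, abs_of_pos hR0])
  have e : ∫ x in (-R)..R, QQ (x : ℂ) = (∫ x in (-R)..R, QQ ((x : ℂ) + R * Complex.I))
      - Complex.I * (∫ y in (0:ℝ)..R, QQ ((R : ℂ) + y * Complex.I))
      + Complex.I * (∫ y in (0:ℝ)..R, QQ (((-R : ℝ) : ℂ) + y * Complex.I)) := by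
    simp only [smul_eq_mul] at hrect
    linear_combination hrect
  rw [e]
  refine (norm_add_le _ _).trans ?_
  refine (add_le_add (norm_sub_le _ _) le_rfl).trans ?_
  rw [norm_mul, norm_mul, Complex.norm_I, one_mul, one_mul]
  refine (add_le_add (add_le_add b1 b2) b3).trans (le_of_eq ?_)
  rw [abs_of_pos (by linarith), abs_of_pos (by linarith)]
  field_simp
  ring

lemma QQ_im_tendsto :
    Tendsto (fun R : ℝ => ∫ x in (0:ℝ)..R, (QQ (x : ℂ)).im) atTop (𝓝 0) := by
  have h := QQ_integral_tendsto
  have h2 : Tendsto (fun R : ℝ => (∫ x in (-R)..R, QQ (x : ℂ)).im / 2) atTop (𝓝 0) := by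
    have := ((Complex.continuous_im.tendsto 0).comp h).div_const 2
    simpa using this
  refine h2.congr fun R => ?_
  have i : ∀ a b : ℝ, IntervalIntegrable (fun x : ℝ => QQ (x : ℂ)) volume a b := fun a b =>
    ofReal_cont_QQ.intervalIntegrable a b
  have e1 : ∫ x in (-R)..(0:ℝ), QQ (x : ℂ) = ∫ x in (0:ℝ)..R, - (starRingEnd ℂ) (QQ (x : ℂ)) := by
    have := intervalIntegral.integral_comp_neg (a := 0) (b := R) (fun x : ℝ => QQ (x : ℂ))
    rw [neg_zero] at this
    rw [← this]
    congr 1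
    ext x
    exact QQ_conj x
  have ic : IntervalIntegrable (fun x : ℝ => - (starRingEnd ℂ) (QQ (x : ℂ))) volume 0 R :=
    ((Complex.continuous_conj.comp ofReal_cont_QQ).neg).intervalIntegrable 0 R
  rw [← intervalIntegral.integral_add_adjacent_intervals (i (-R) 0) (i 0 R), e1,
    ← intervalIntegral.integral_add ic (i 0 R)]
  have e2 : ∀ x : ℝ, - (starRingEnd ℂ) (QQ (x : ℂ)) + QQ (x : ℂ)
      = 2 * Complex.I * (((QQ (x : ℂ)).im : ℝ) : ℂ) := by
    intro x
    apply Complex.ext <;> simp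
    ring
  simp only [e2]
  rw [intervalIntegral.integral_const_mul, intervalIntegral.integral_ofReal]
  simp

lemma int_of_bound {f : ℝ → ℝ} (hf : Continuous f) {C : ℝ} (hC : ∀ t, 1 ≤ t → |f t| ≤ C / t ^ 2) :
    IntegrableOn f (Ioi 0) := by
  have hC0 : 0 ≤ C := by have := hC 1 le_rfl; simp at this; exact (abs_nonneg _).trans this
  rw [← Ioc_union_Ioi_eq_Ioi zero_le_one]
  refine IntegrableOn.union ((hf.integrableOn_Icc).mono_set Ioc_subset_Icc_self) ?_
  refine Integrable.mono' ((integrable_inv_one_add_sq.const_mul (2 * C)).integrableOn)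
    hf.aestronglyMeasurable ?_
  filter_upwards [ae_restrict_mem measurableSet_Ioi] with t ht
  have ht : 1 < t := ht
  refine (hC t ht.le).trans ?_
  rw [← div_eq_mul_inv, div_le_div_iff₀ (by positivity) (by positivity)]
  nlinarith [mul_nonneg hC0 (show 0 ≤ t^2 - 1 by nlinarith)]

noncomputable def f1 (t : ℝ) : ℝ := t ^ 2 * (WW t).re ^ 2 * (WW t).im
noncomputable def f2 (t : ℝ) : ℝ := t ^ 2 * (WW t).im ^ 3 - π ^ 2 * (WW t).im * (t ^ 2 / 4 + 1 / 16)

lemma QQ_im (t : ℝ) : (QQ t).im = 3 * f1 t - f2 t := by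
  unfold QQ f1 f2
  have hw : WW t = (WW t).re + (WW t).im * Complex.I := (Complex.re_add_im _).symm
  generalize (WW t).re = a at *
  generalize (WW t).im = b at *
  rw [hw]
  have : (t:ℂ) ^ 2 * (a + b * Complex.I) ^ 3 + π ^ 2 * (a + b * Complex.I) * ((t:ℂ) ^ 2 / 4 + 1 / 16)
    = ((t ^ 2 * (a ^ 3 - 3 * a * b ^ 2) + π ^ 2 * a * (t ^ 2 / 4 + 1 / 16) : ℝ) : ℂ)
      + ((t ^ 2 * (3 * a ^ 2 * b - b ^ 3) + π ^ 2 * b * (t ^ 2 / 4 + 1 / 16) : ℝ) : ℂ) * Complex.I := by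
    push_cast
    linear_combination ((t:ℂ)^2 * (3 * a * b^2 + b^3 * Complex.I)) * Complex.I_sq
  rw [this]
  simp only [Complex.add_im, Complex.mul_im, Complex.ofReal_re, Complex.ofReal_im, Complex.I_re,
    Complex.I_im]
  ring

lemma WW_re_c : Continuous fun t : ℝ => (WW (t:ℂ)).re := Complex.continuous_re.comp ofReal_cont_WW
lemma WW_im_c : Continuous fun t : ℝ => (WW (t:ℂ)).im := Complex.continuous_im.comp ofReal_cont_WW

lemma f1_int : IntegrableOn f1 (Ioi 0) := by
  obtain ⟨B, hB0, hB⟩ := WW_bound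
  obtain ⟨C, hC0, hC⟩ := WW_asymp
  have h1 := WW_re_c
  have h2 := WW_im_c
  refine int_of_bound (C := C ^ 2 * B) (by unfold f1; fun_prop) fun t ht => ?_
  have ht0 : 0 < t := by linarith
  have ha : |(WW t).re| ≤ C / t ^ 4 := by
    have h := hC t (by simp) (Complex.ofReal_ne_zero.2 ht0.ne')
    rw [Complex.norm_real, Real.norm_eq_abs, abs_of_pos ht0] at h
    refine le_trans ?_ h
    refine le_trans (le_of_eq ?_) (Complex.abs_re_le_norm _)
    have e : Complex.I * ((π : ℂ) / 2 + π / (16 * (t:ℂ) ^ 2))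
      = ((π / 2 + π / (16 * t ^ 2) : ℝ) : ℂ) * Complex.I := by push_cast; ring
    rw [e]
    congr 1
    simp only [Complex.sub_re, Complex.mul_re, Complex.ofReal_re, Complex.ofReal_im, Complex.I_re,
      Complex.I_im]
    ring
  have hb : |(WW t).im| ≤ B := (Complex.abs_im_le_norm _).trans (hB t (by simp))
  unfold f1
  rw [abs_mul, abs_mul, abs_pow, abs_pow, abs_of_pos ht0]
  calc t ^ 2 * |(WW t).re| ^ 2 * |(WW t).im| ≤ t ^ 2 * (C / t ^ 4) ^ 2 * B := by gcongr
    _ = C ^ 2 * B / t ^ 6 := by field_simp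
    _ ≤ C ^ 2 * B / t ^ 2 := by
      gcongr
      norm_num

lemma QQ_im_int : IntegrableOn (fun t : ℝ => (QQ t).im) (Ioi 0) := by
  obtain ⟨C, hC0, hC⟩ := QQ_bound
  refine int_of_bound (C := C) (Complex.continuous_im.comp ofReal_cont_QQ) fun t ht => ?_
  have ht0 : 0 < t := by linarith
  have h := hC t (by simp) (by rw [Complex.norm_real, Real.norm_eq_abs, abs_of_pos ht0]; exact ht)
  rw [Complex.norm_real, Real.norm_eq_abs, abs_of_pos ht0] at h
  exact (Complex.abs_im_le_norm _).trans h

lemma f_main : 3 * ∫ t in Ioi (0:ℝ), f1 t = ∫ t in Ioi (0:ℝ), f2 t := by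
  have h0 : ∫ t in Ioi (0:ℝ), (QQ t).im = 0 :=
    tendsto_nhds_unique (intervalIntegral_tendsto_integral_Ioi 0 QQ_im_int tendsto_id) QQ_im_tendsto
  have e : ∀ t : ℝ, f2 t = 3 * f1 t - (QQ t).im := fun t => by rw [QQ_im]; ring
  simp only [e]
  rw [integral_sub (f1_int.const_mul 3) QQ_im_int, h0, integral_const_mul, sub_zero]

theorem main_of_bridge (hW : ∀ t : ℝ, 0 < t → WW t = ((t * K0 t ^ 2 : ℝ) : ℂ)
      + ((π * t * (I0 t * K0 t) : ℝ) : ℂ) * Complex.I) :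
    (∫ t in Ioi (0:ℝ), I0 t * (K0 t)^5 * t^5)
    = (π^2/3) * ∫ t in Ioi (0:ℝ),
        I0 t * K0 t * ((I0 t)^2 * (K0 t)^2 - 1/(4*t^2) - 1/(16*t^4)) * t^5 := by
  have hre : ∀ t : ℝ, 0 < t → (WW t).re = t * K0 t ^ 2 := fun t ht => by
    rw [hW t ht]
    simp only [Complex.add_re, Complex.mul_re, Complex.ofReal_re, Complex.ofReal_im, Complex.I_re,
      Complex.I_im]
    ring
  have him : ∀ t : ℝ, 0 < t → (WW t).im = π * t * (I0 t * K0 t) := fun t ht => by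
    rw [hW t ht]
    simp only [Complex.add_im, Complex.mul_im, Complex.ofReal_re, Complex.ofReal_im, Complex.I_re,
      Complex.I_im]
    ring
  have e1 : ∫ t in Ioi (0:ℝ), f1 t = π * ∫ t in Ioi (0:ℝ), I0 t * (K0 t)^5 * t^5 := by
    rw [← integral_const_mul]
    refine setIntegral_congr_fun measurableSet_Ioi fun t ht => ?_
    simp only [f1, hre t ht, him t ht]
    ring
  have e2 : ∫ t in Ioi (0:ℝ), f2 t = π ^ 3 * ∫ t in Ioi (0:ℝ),
        I0 t * K0 t * ((I0 t)^2 * (K0 t)^2 - 1/(4*t^2) - 1/(16*t^4)) * t^5 := by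
    rw [← integral_const_mul]
    refine setIntegral_congr_fun measurableSet_Ioi fun t ht => ?_
    have : t ≠ 0 := ne_of_gt ht
    simp only [f2, him t ht]
    field_simp
    ring
  have h := f_main
  rw [e1, e2] at h
  have hp := Real.pi_pos.ne'
  have : π * (3 * ∫ t in Ioi (0:ℝ), I0 t * (K0 t)^5 * t^5) = π * (π ^ 2 * ∫ t in Ioi (0:ℝ),
        I0 t * K0 t * ((I0 t)^2 * (K0 t)^2 - 1/(4*t^2) - 1/(16*t^4)) * t^5) := by
    linear_combination h
  have := mul_left_cancel₀ hp this
  linear_combination this / 3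

open Filter Topology

lemma cosh_quad (v : ℝ) : 1 + v ^ 2 / 2 ≤ Real.cosh v := by
  have h1 : Real.cosh v = 1 + 2 * Real.sinh (v / 2) ^ 2 := by
    have := Real.cosh_two_mul (v / 2)
    have h2 := Real.cosh_sq (v / 2)
    rw [show 2 * (v / 2) = v by ring] at this
    linarith
  have h3 : |v / 2| ≤ |Real.sinh (v / 2)| := by
    rw [Real.abs_sinh]; exact Real.self_le_sinh_iff.2 (abs_nonneg _)
  have h4 := sq_le_sq.2 h3
  rw [h1]; nlinarith

lemma sech_le (v : ℝ) : (Real.cosh v)⁻¹ ≤ 2 * (1 + v ^ 2)⁻¹ := by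
  have := cosh_quad v
  rw [← div_eq_mul_inv, inv_eq_one_div, div_le_div_iff₀ (Real.cosh_pos v) (by positivity)]
  nlinarith

lemma sqrt_sech_le (v : ℝ) : (√(Real.cosh v))⁻¹ ≤ 8 * (1 + v ^ 2)⁻¹ := by
  have h := cosh_quad (v / 2)
  have h1 : Real.cosh (v / 2) ≤ √(Real.cosh v) := by
    apply Real.le_sqrt_of_sq_le
    have := Real.cosh_two_mul (v / 2)
    have h2 := Real.cosh_sq (v / 2)
    rw [show 2 * (v / 2) = v by ring] at this
    nlinarith [sq_nonneg (Real.sinh (v/2))]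
  have h0 := Real.cosh_pos v
  rw [← div_eq_mul_inv, inv_eq_one_div, div_le_div_iff₀ (by positivity) (by positivity)]
  nlinarith

lemma sqrt_sech_int : Integrable (fun v : ℝ => (√(Real.cosh v))⁻¹) := by
  refine Integrable.mono' (integrable_inv_one_add_sq.const_mul 8) ?_ ?_
  · refine Continuous.aestronglyMeasurable ?_
    exact (Real.continuous_sqrt.comp Real.continuous_cosh).inv₀
      fun v => (Real.sqrt_pos.2 (Real.cosh_pos v)).ne'
  · refine Eventually.of_forall fun v => ?_
    have h0 := Real.cosh_pos v
    rw [Real.norm_eq_abs, abs_of_pos (by positivity)]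
    exact sqrt_sech_le v

lemma K_int {x : ℝ} (hx : 0 < x) : Integrable (fun u : ℝ => Real.exp (-(x * Real.cosh u))) := by
  refine Integrable.mono' (integrable_inv_one_add_sq.const_mul (2 / x)) ?_ ?_
  · exact Continuous.aestronglyMeasurable (by fun_prop)
  · refine Eventually.of_forall fun v => ?_
    have h0 := Real.cosh_pos v
    rw [Real.norm_eq_abs, abs_of_pos (Real.exp_pos _), Real.exp_neg]
    have h1 : x * Real.cosh v ≤ Real.exp (x * Real.cosh v) := by
      linarith [Real.add_one_le_exp (x * Real.cosh v)]
    have h2 : 0 < x * Real.cosh v := by positivity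
    calc (Real.exp (x * Real.cosh v))⁻¹ ≤ (x * Real.cosh v)⁻¹ := inv_anti₀ h2 h1
      _ = x⁻¹ * (Real.cosh v)⁻¹ := by rw [mul_inv]
      _ ≤ x⁻¹ * (2 * (1 + v ^ 2)⁻¹) := by gcongr; exact sech_le v
      _ = _ := by ring

lemma K_full (x : ℝ) : ∫ u : ℝ, Real.exp (-(x * Real.cosh u)) = 2 * K0 x := by
  unfold K0
  rw [← integral_comp_abs (f := fun u => Real.exp (-(x * Real.cosh u)))]
  simp only [Real.cosh_abs]

/-- The basic entire function. -/
noncomputable def ff (x : ℝ) (ζ : ℂ) : ℂ := Complex.exp (Complex.I * x * Complex.sinh ζ)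

lemma ff_diff (x : ℝ) : Differentiable ℂ (ff x) := by
  unfold ff
  exact ((Complex.differentiable_sinh).const_mul _).cexp

lemma ff_cont (x : ℝ) : Continuous (ff x) := (ff_diff x).continuous

lemma ff_norm (x u y : ℝ) : ‖ff x (u + y * Complex.I)‖
    = Real.exp (-(x * Real.cosh u * Real.sin y)) := by
  unfold ff
  rw [Complex.norm_exp, Complex.sinh_add, Complex.sinh_mul_I, Complex.cosh_mul_I,
    ← Complex.ofReal_sinh, ← Complex.ofReal_cosh, ← Complex.ofReal_sin, ← Complex.ofReal_cos]
  congr 1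
  simp only [Complex.mul_re, Complex.I_re, Complex.I_im, Complex.ofReal_re, Complex.ofReal_im,
    Complex.mul_im, Complex.add_re, Complex.add_im]
  ring

lemma ff_top (x u : ℝ) : ff x (u + (π / 2 : ℝ) * Complex.I)
    = ((Real.exp (-(x * Real.cosh u)) : ℝ) : ℂ) := by
  unfold ff
  rw [Complex.sinh_add, Complex.sinh_mul_I, Complex.cosh_mul_I,
    ← Complex.ofReal_sinh, ← Complex.ofReal_cosh, ← Complex.ofReal_sin, ← Complex.ofReal_cos,
    Real.sin_pi_div_two, Real.cos_pi_div_two, Complex.ofReal_exp]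
  congr 1
  push_cast
  linear_combination (x * Complex.cosh u) * Complex.I_sq

lemma ff_left (x y : ℝ) : ff x (y * Complex.I) = ((Real.exp (-(x * Real.sin y)) : ℝ) : ℂ) := by
  unfold ff
  rw [Complex.sinh_mul_I, ← Complex.ofReal_sin, Complex.ofReal_exp]
  congr 1
  push_cast
  linear_combination (x * Complex.sin y) * Complex.I_sq

lemma ff_side {x : ℝ} (hx : 0 < x) (σ : ℝ → ℝ) (hσ : Tendsto (fun R => Real.cosh (σ R)) atTop atTop)
    {a b : ℝ} (hab : ∀ y ∈ uIoc a b, 0 < Real.sin y) :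
    Tendsto (fun R : ℝ => ∫ y in a..b, ff x ((σ R : ℝ) + y * Complex.I)) atTop (𝓝 0) := by
  have h := intervalIntegral.tendsto_integral_filter_of_dominated_convergence (μ := volume)
    (a := a) (b := b) (l := atTop) (f := fun _ => (0:ℂ))
    (F := fun (R : ℝ) (y : ℝ) => ff x ((σ R : ℝ) + y * Complex.I)) (fun _ => (1:ℝ)) ?_ ?_ ?_ ?_
  · simpa using h
  · refine Eventually.of_forall fun R => ?_
    refine Continuous.aestronglyMeasurable ?_
    exact (ff_cont x).comp (by fun_prop)
  · refine Eventually.of_forall fun R => Eventually.of_forall fun y hy => ?_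
    rw [ff_norm, Real.exp_le_one_iff]
    have := hab y hy
    have h2 := Real.cosh_pos (σ R)
    have : 0 < x * Real.cosh (σ R) * Real.sin y := by positivity
    linarith
  · exact intervalIntegrable_const
  · refine Eventually.of_forall fun y hy => ?_
    rw [tendsto_zero_iff_norm_tendsto_zero]
    simp only [ff_norm]
    refine Real.tendsto_exp_neg_atTop_nhds_zero.comp ?_
    exact (hσ.const_mul_atTop hx).atTop_mul_const (hab y hy)

noncomputable def SS (x : ℝ) : ℝ := ∫ y in (0:ℝ)..(π / 2), Real.exp (-(x * Real.sin y))

lemma ff_halfline {x : ℝ} (hx : 0 < x) :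
    Tendsto (fun R : ℝ => ∫ u in (0:ℝ)..R, ff x u) atTop (𝓝 ((K0 x : ℂ) + Complex.I * (SS x : ℂ))) := by
  have hrect : ∀ R : ℝ, ∫ u in (0:ℝ)..R, ff x u =
      ((∫ u in (0:ℝ)..R, Real.exp (-(x * Real.cosh u)) : ℝ) : ℂ)
      - Complex.I * (∫ y in (0:ℝ)..(π / 2), ff x ((R : ℝ) + y * Complex.I))
      + Complex.I * (SS x : ℂ) := by
    intro R
    have h := Complex.integral_boundary_rect_eq_zero_of_differentiableOn (ff x) 0
      ((R : ℂ) + (π / 2 : ℝ) * Complex.I) (ff_diff x).differentiableOn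
    simp only [Complex.zero_re, Complex.zero_im, Complex.ofReal_re, Complex.ofReal_im, Complex.add_re, Complex.add_im, Complex.mul_re,
      Complex.mul_im, Complex.I_re, Complex.I_im, mul_zero, mul_one, zero_mul, sub_zero, add_zero,
      zero_add, Complex.ofReal_zero, ff_top, ff_left, smul_eq_mul] at h
    rw [intervalIntegral.integral_ofReal, intervalIntegral.integral_ofReal] at h
    unfold SS
    linear_combination h
  simp only [hrect]
  have hK : Tendsto (fun R : ℝ => ((∫ u in (0:ℝ)..R, Real.exp (-(x * Real.cosh u)) : ℝ) : ℂ)) atTop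
      (𝓝 (K0 x : ℂ)) :=
    (Complex.continuous_ofReal.tendsto _).comp
      (intervalIntegral_tendsto_integral_Ioi 0 (K_int hx).integrableOn tendsto_id)
  have hs := ff_side hx (fun R => R) cosh_tendsto (a := 0) (b := π / 2) (by
    intro y hy
    rw [uIoc_of_le (by positivity)] at hy
    exact Real.sin_pos_of_pos_of_lt_pi hy.1 (by linarith [hy.2, Real.pi_pos]))
  have := (hK.sub (hs.const_mul Complex.I)).add_const (Complex.I * (SS x : ℂ))
  simpa using this

lemma rr_sinh (u : ℝ) : rr (Real.sinh u) = (Real.cosh u)⁻¹ := by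
  unfold rr
  rw [show 1 + Real.sinh u ^ 2 = Real.cosh u ^ 2 by linarith [Real.cosh_sq u],
    Real.sqrt_sq (Real.cosh_pos u).le]

lemma ff_ibp (x R : ℝ) : (x : ℂ) * ∫ u in (0:ℝ)..R, ff x u =
    -Complex.I * Complex.exp (Complex.I * x * (Real.sinh R : ℂ)) * ((Real.cosh R)⁻¹ : ℝ)
    + Complex.I + Complex.I * ∫ w in (0:ℝ)..(Real.sinh R), Complex.exp (Complex.I * x * w) * (g1 w : ℂ) := by
  have hg1c : Continuous g1 := continuous_iff_continuousAt.2 fun w => (g1_d w).continuousAt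
  have hec : Continuous (fun w : ℝ => Complex.exp (Complex.I * x * w)) := by fun_prop
  have hPhi : ∀ w : ℝ, HasDerivAt (fun w : ℝ => -Complex.I * (Complex.exp (Complex.I * x * w) * (rr w : ℂ)))
      ((x : ℂ) * (Complex.exp (Complex.I * x * w) * (rr w : ℂ))
        - Complex.I * (Complex.exp (Complex.I * x * w) * (g1 w : ℂ))) w := by
    intro w
    have h1 : HasDerivAt (fun w : ℝ => Complex.I * x * (w : ℂ)) (Complex.I * x) w := by
      simpa using (Complex.ofRealCLM.hasDerivAt (x := w)).const_mul (Complex.I * x)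
    have h2 := (h1.cexp.mul (rr_hasDeriv w).ofReal_comp).const_mul (-Complex.I)
    refine HasDerivAt.congr_deriv h2 ?_
    unfold g1
    push_cast
    linear_combination (-(x:ℂ) * (Complex.exp (Complex.I * x * w) * (rr w : ℂ))) * Complex.I_sq
  have c1 : Continuous (fun w : ℝ => (x : ℂ) * (Complex.exp (Complex.I * x * w) * (rr w : ℂ))) :=
    continuous_const.mul (hec.mul (Complex.continuous_ofReal.comp rr_cont))
  have c2 : Continuous (fun w : ℝ => Complex.I * (Complex.exp (Complex.I * x * w) * (g1 w : ℂ))) :=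
    continuous_const.mul (hec.mul (Complex.continuous_ofReal.comp hg1c))
  have hF := intervalIntegral.integral_eq_sub_of_hasDerivAt (a := 0) (b := Real.sinh R)
    (fun w _ => hPhi w) ((c1.sub c2).intervalIntegrable _ _)
  rw [intervalIntegral.integral_sub (c1.intervalIntegrable _ _) (c2.intervalIntegrable _ _),
    intervalIntegral.integral_const_mul, intervalIntegral.integral_const_mul] at hF
  have hsub := intervalIntegral.integral_comp_smul_deriv (a := 0) (b := R) (f := Real.sinh)
    (f' := Real.cosh) (g := fun w : ℝ => Complex.exp (Complex.I * x * w) * (rr w : ℂ))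
    (fun u _ => Real.hasDerivAt_sinh u) Real.continuous_cosh.continuousOn
    (hec.mul (Complex.continuous_ofReal.comp rr_cont))
  rw [Real.sinh_zero] at hsub
  have hl : ∀ u : ℝ, Real.cosh u • ((fun w : ℝ => Complex.exp (Complex.I * x * w) * (rr w : ℂ)) ∘ Real.sinh) u
      = ff x u := by
    intro u
    have : ((Real.cosh u : ℝ) : ℂ) ≠ 0 := Complex.ofReal_ne_zero.2 (Real.cosh_pos u).ne'
    simp only [Function.comp, rr_sinh, Complex.real_smul, ff]
    rw [Complex.ofReal_sinh, Complex.ofReal_inv]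
    field_simp
  simp only [hl] at hsub
  rw [hsub]
  simp only [rr_sinh, rr_zero] at hF
  simp at hF ⊢
  linear_combination hF

lemma MM_real {x : ℝ} (hx : 0 < x) :
    MM (x : ℂ) = (x : ℂ) * ((K0 x : ℂ) + Complex.I * (SS x : ℂ)) := by
  have h1 := (ff_halfline hx).const_mul (x : ℂ)
  refine tendsto_nhds_unique ?_ h1
  simp only [ff_ibp]
  have t1 : Tendsto (fun R : ℝ => -Complex.I * Complex.exp (Complex.I * x * (Real.sinh R : ℂ))
      * ((Real.cosh R)⁻¹ : ℝ)) atTop (𝓝 0) := by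
    refine squeeze_zero_norm (fun R => ?_) cosh_tendsto.inv_tendsto_atTop
    rw [norm_mul, norm_mul, norm_neg, Complex.norm_I, norm_isech, one_mul]
    have : Complex.I * x * (Real.sinh R : ℂ) = ((x * Real.sinh R : ℝ) : ℂ) * Complex.I := by
      push_cast; ring
    rw [this, Complex.norm_exp_ofReal_mul_I, one_mul]
    rfl
  have t2 : Tendsto (fun R : ℝ => ∫ w in (0:ℝ)..(Real.sinh R),
      Complex.exp (Complex.I * x * w) * (g1 w : ℂ)) atTop (𝓝 (JJ g1 x)) :=
    intervalIntegral_tendsto_integral_Ioi 0 (JJ_integrable g1_int (by simp)) sinh_tendsto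
  have := (t1.add_const Complex.I).add (t2.const_mul Complex.I)
  convert this using 2
  unfold MM; ring

open Filter Topology

lemma K0_sq {t : ℝ} (ht : 0 < t) :
    K0 t ^ 2 = 2 * ∫ v in Ioi (0:ℝ), K0 (2 * t * Real.cosh v) := by
  have hk := K_int ht
  set k : ℝ → ℝ := fun u => Real.exp (-(t * Real.cosh u)) with hkdef
  have hkc : Continuous k := by fun_prop
  have hkf : ∫ u, k u = 2 * K0 t := K_full t
  have hint : Integrable (Function.uncurry fun u v : ℝ => k u * k (u + v)) (volume.prod volume) := by
    rw [integrable_prod_iff]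
    · constructor
      · refine Eventually.of_forall fun u => ?_
        exact (hk.comp_add_left u).const_mul (k u)
      · have : ∀ u : ℝ, ∫ v, ‖Function.uncurry (fun u v : ℝ => k u * k (u + v)) (u, v)‖ = k u * (2 * K0 t) := by
          intro u
          have h1 : ∀ v, ‖Function.uncurry (fun u v : ℝ => k u * k (u + v)) (u, v)‖ = k u * k (u + v) := by
            intro v
            simp only [Function.uncurry, Real.norm_eq_abs]
            exact abs_of_pos (mul_pos (Real.exp_pos _) (Real.exp_pos _))
          simp only [h1]
          rw [integral_const_mul, integral_add_left_eq_self k u, hkf]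
        simp only [this]
        exact hk.mul_const _
    · refine Continuous.aestronglyMeasurable ?_
      simp only [Function.uncurry_def]
      fun_prop
  have hF := integral_integral_swap hint
  have h1 : ∀ u : ℝ, ∫ v, k u * k (u + v) = k u * (2 * K0 t) := by
    intro u; rw [integral_const_mul, integral_add_left_eq_self k u, hkf]
  have h2 : ∀ v : ℝ, ∫ u, k u * k (u + v) = 2 * K0 (2 * t * Real.cosh (v / 2)) := by
    intro v
    rw [← K_full, ← integral_add_right_eq_self (fun u => Real.exp (-(2 * t * Real.cosh (v/2) * Real.cosh u))) (v / 2)]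
    congr 1; ext u
    simp only [hkdef]
    rw [← Real.exp_add]
    congr 1
    have e1 : Real.cosh u = Real.cosh (u + v/2) * Real.cosh (v/2) - Real.sinh (u + v/2) * Real.sinh (v/2) := by
      rw [← Real.cosh_sub]; congr 1; ring
    have e2 : Real.cosh (u+v) = Real.cosh (u + v/2) * Real.cosh (v/2) + Real.sinh (u + v/2) * Real.sinh (v/2) := by
      rw [← Real.cosh_add]; congr 1; ring
    rw [e1, e2]; ring
  simp only [h1, h2] at hF
  rw [integral_mul_const, hkf, integral_const_mul,
    Measure.integral_comp_div (fun v => K0 (2 * t * Real.cosh v)) 2] at hF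
  have h3 : ∫ v : ℝ, K0 (2 * t * Real.cosh v) = 2 * ∫ v in Ioi (0:ℝ), K0 (2 * t * Real.cosh v) := by
    rw [← integral_comp_abs (f := fun v => K0 (2 * t * Real.cosh v))]
    simp only [Real.cosh_abs]
  rw [h3] at hF
  simp only [smul_eq_mul, abs_of_pos (two_pos : (0:ℝ) < 2)] at hF
  nlinarith

lemma I0_fold (t : ℝ) : ∫ α in (0:ℝ)..π, Real.exp (t * Real.cos (2 * α)) = π * I0 t := by
  have hc : Continuous fun θ : ℝ => Real.exp (t * Real.cos θ) := by fun_prop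
  rw [intervalIntegral.integral_comp_mul_left (fun θ => Real.exp (t * Real.cos θ)) two_ne_zero,
    mul_zero, ← intervalIntegral.integral_add_adjacent_intervals (hc.intervalIntegrable 0 π)
      (hc.intervalIntegrable π (2*π))]
  have h := intervalIntegral.integral_comp_sub_left (a := 0) (b := π) (fun θ => Real.exp (t * Real.cos θ)) (2*π)
  simp only [Real.cos_two_pi_sub, sub_zero] at h
  rw [show 2 * π - π = π by ring] at h
  rw [← h]
  unfold I0
  have := Real.pi_pos
  field_simp
  simp only [smul_eq_mul]; ring

lemma cexp_cos_shift (t u : ℝ) :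
    ∫ α in (0:ℝ)..π, Complex.exp (t * Complex.cos (2 * α - u * Complex.I)) = ((π * I0 t : ℝ) : ℂ) := by
  set f : ℂ → ℂ := fun ζ => Complex.exp (t * Complex.cos (2 * ζ)) with hf
  have hd : Differentiable ℂ f := by
    rw [hf]; fun_prop
  have h := Complex.integral_boundary_rect_eq_zero_of_differentiableOn f 0
      ((π : ℂ) + ((-u / 2 : ℝ) : ℂ) * Complex.I) hd.differentiableOn
  simp only [Complex.zero_re, Complex.zero_im, Complex.ofReal_re, Complex.ofReal_im, Complex.add_re, Complex.add_im, Complex.mul_re,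
      Complex.mul_im, Complex.I_re, Complex.I_im, mul_zero, mul_one, zero_mul, sub_zero, add_zero,
      zero_add, Complex.ofReal_zero, smul_eq_mul] at h
  have hper : ∀ y : ℝ, f (π + y * Complex.I) = f (y * Complex.I) := by
    intro y
    simp only [hf]
    rw [show 2 * ((π:ℂ) + y * Complex.I) = 2 * (y * Complex.I) + 2 * π by ring, Complex.cos_add_two_pi]
  have hb : ∀ x : ℝ, f (x : ℂ) = ((Real.exp (t * Real.cos (2 * x)) : ℝ) : ℂ) := by
    intro x; simp only [hf]; push_cast; rfl
  have ht : ∀ x : ℝ, f (x + ((-u / 2 : ℝ) : ℂ) * Complex.I) = Complex.exp (t * Complex.cos (2 * x - u * Complex.I)) := by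
    intro x; simp only [hf]; congr 3; push_cast; ring
  simp only [hper, hb, ht] at h
  rw [intervalIntegral.integral_ofReal, I0_fold] at h
  linear_combination -h

lemma ff_line {r : ℝ} (hr : 0 < r) {α : ℝ} (h0 : 0 < α) (h1 : α < π) :
    Integrable (fun u : ℝ => ff r (u + α * Complex.I)) ∧
    ∫ u : ℝ, ff r (u + α * Complex.I) = ((2 * K0 r : ℝ) : ℂ) := by
  have hs := Real.sin_pos_of_pos_of_lt_pi h0 h1
  have hint : Integrable (fun u : ℝ => ff r (u + α * Complex.I)) := by
    refine Integrable.mono' (K_int (mul_pos hr hs)) ?_ ?_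
    · exact Continuous.aestronglyMeasurable ((ff_cont r).comp (by fun_prop))
    · refine Eventually.of_forall fun u => ?_
      rw [ff_norm, mul_right_comm]
  refine ⟨hint, ?_⟩
  have hrect : ∀ R : ℝ, ∫ u in (-R)..R, ff r (u + α * Complex.I) =
      ((∫ u in (-R)..R, Real.exp (-(r * Real.cosh u)) : ℝ) : ℂ)
      - Complex.I * (∫ y in α..(π / 2), ff r ((R : ℝ) + y * Complex.I))
      + Complex.I * (∫ y in α..(π / 2), ff r ((-R : ℝ) + y * Complex.I)) := by
    intro R
    have h := Complex.integral_boundary_rect_eq_zero_of_differentiableOn (ff r)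
      (((-R : ℝ) : ℂ) + α * Complex.I)
      ((R : ℂ) + (π / 2 : ℝ) * Complex.I) (ff_diff r).differentiableOn
    simp only [Complex.zero_re, Complex.zero_im, Complex.ofReal_re, Complex.ofReal_im, Complex.add_re, Complex.add_im, Complex.mul_re,
      Complex.mul_im, Complex.I_re, Complex.I_im, mul_zero, mul_one, zero_mul, sub_zero, add_zero,
      zero_add, Complex.ofReal_zero, ff_top, smul_eq_mul] at h
    rw [intervalIntegral.integral_ofReal] at h
    linear_combination h
  have hy : ∀ y ∈ uIoc α (π / 2), 0 < Real.sin y := by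
    intro y hy
    have hpp := Real.pi_pos
    rcases mem_uIoc.1 hy with h | h
    · exact Real.sin_pos_of_pos_of_lt_pi (by linarith [h.1]) (by linarith [h.2])
    · exact Real.sin_pos_of_pos_of_lt_pi (by linarith [h.1]) (by linarith [h.2])
  have s1 := ff_side hr (fun R => R) cosh_tendsto hy
  have s2 := ff_side hr (fun R => -R) (by simpa only [Real.cosh_neg] using cosh_tendsto) hy
  have hK : Tendsto (fun R : ℝ => ((∫ u in (-R)..R, Real.exp (-(r * Real.cosh u)) : ℝ) : ℂ)) atTop
      (𝓝 ((2 * K0 r : ℝ) : ℂ)) := by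
    refine (Complex.continuous_ofReal.tendsto _).comp ?_
    rw [← K_full]
    exact intervalIntegral_tendsto_integral (K_int hr) tendsto_neg_atTop_atBot tendsto_id
  have hL := intervalIntegral_tendsto_integral hint tendsto_neg_atTop_atBot tendsto_id
  refine tendsto_nhds_unique hL ?_
  have := (hK.sub (s1.const_mul Complex.I)).add (s2.const_mul Complex.I)
  simp only [mul_zero, sub_zero, add_zero] at this
  refine this.congr fun R => ?_
  exact (hrect R).symm

lemma ff_trig (t u α : ℝ) : ff (2 * t * Real.sin α) (u + α * Complex.I)
    = ((Real.exp (-(t * Real.cosh u)) : ℝ) : ℂ) * Complex.exp (t * Complex.cos (2 * α - u * Complex.I)) := by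
  unfold ff
  rw [Complex.ofReal_exp, ← Complex.exp_add]
  congr 1
  rw [Complex.sinh_add, Complex.sinh_mul_I, Complex.cosh_mul_I, Complex.cos_sub, Complex.cos_mul_I,
    Complex.sin_mul_I, Complex.cos_two_mul, Complex.sin_two_mul]
  push_cast
  have := Complex.sin_sq_add_cos_sq (α : ℂ)
  have hc : Complex.cos (α:ℂ)^2 = 1 - Complex.sin α ^ 2 := by linear_combination this
  rw [hc]
  linear_combination (2 * t * Complex.sin α ^2 * Complex.cosh u) * Complex.I_sq

lemma gauss_bd {c : ℝ} (hc : 0 < c) :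
    ∫ α in Ioc (0:ℝ) π, Real.exp (-(c * Real.sin α ^ 2)) ≤ 2 * √(π / (c * (4 / π ^ 2))) := by
  set b := c * (4 / π ^ 2) with hb
  have hpp := Real.pi_pos
  have hb0 : 0 < b := by positivity
  have key : ∀ x : ℝ, 0 ≤ x → x ≤ π / 2 → Real.exp (-(c * Real.sin x ^ 2)) ≤ Real.exp (-b * x ^ 2) := by
    intro x h0 h1
    have h := Real.mul_le_sin h0 h1
    apply Real.exp_le_exp.2
    have h2 : (2 / π * x) ^ 2 ≤ Real.sin x ^ 2 := by
      apply pow_le_pow_left₀ (by positivity) h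
    have h3 : b * x ^ 2 = c * (2 / π * x) ^ 2 := by rw [hb]; ring
    nlinarith
  have hi1 := integrable_exp_neg_mul_sq hb0
  have hi2 : Integrable fun x : ℝ => Real.exp (-b * (π - x) ^ 2) := hi1.comp_sub_left π
  calc _ ≤ ∫ α in Ioc (0:ℝ) π, (Real.exp (-b * α ^ 2) + Real.exp (-b * (π - α) ^ 2)) := by
        refine setIntegral_mono_on ?_ (hi1.add hi2).integrableOn measurableSet_Ioc ?_
        · refine Continuous.integrableOn_Ioc (by fun_prop)
        · intro x hx
          rcases le_total x (π / 2) with h | h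
          · have := key x hx.1.le h
            have := Real.exp_pos (-b * (π - x) ^ 2)
            linarith
          · have := key (π - x) (by linarith [hx.2]) (by linarith)
            rw [Real.sin_pi_sub] at this
            have := Real.exp_pos (-b * x ^ 2)
            linarith
    _ ≤ ∫ α : ℝ, (Real.exp (-b * α ^ 2) + Real.exp (-b * (π - α) ^ 2)) := by
        refine setIntegral_le_integral (hi1.add hi2) (Eventually.of_forall fun x => ?_)
        exact (add_pos (Real.exp_pos _) (Real.exp_pos _)).le
    _ = _ := by
        rw [integral_add hi1 hi2, integral_sub_left_eq_self (fun x => Real.exp (-b * x ^ 2)) volume π,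
          integral_gaussian]
        ring

lemma K0_sin {t : ℝ} (ht : 0 < t) :
    ∫ α in Ioc (0:ℝ) π, K0 (2 * t * Real.sin α) = π * I0 t * K0 t := by
  have hpp := Real.pi_pos
  set F : ℝ → ℝ → ℂ := fun α u => ff (2 * t * Real.sin α) (u + α * Complex.I) with hF
  have hFc : Continuous (Function.uncurry F) := by
    simp only [hF, ff, Function.uncurry_def]; fun_prop
  have hFn : ∀ α u, ‖F α u‖ = Real.exp (-((2 * t * Real.cosh u) * Real.sin α ^ 2)) := by
    intro α u; simp only [hF, ff_norm]; congr 1; ring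
  have hint : Integrable (Function.uncurry F) ((volume.restrict (Ioc (0:ℝ) π)).prod volume) := by
    rw [integrable_prod_iff' hFc.aestronglyMeasurable]
    constructor
    · refine Eventually.of_forall fun u => ?_
      have : Continuous fun α => Function.uncurry F (α, u) := hFc.comp (by fun_prop)
      exact this.integrableOn_Ioc
    · refine Integrable.mono' (sqrt_sech_int.const_mul (2 * √(π / (2 * t * (4 / π ^ 2))))) ?_ ?_
      · exact hFc.norm.aestronglyMeasurable.prod_swap.integral_prod_right'
      · refine Eventually.of_forall fun u => ?_
        have hu := Real.cosh_pos u
        rw [Real.norm_eq_abs, abs_of_nonneg (integral_nonneg fun _ => norm_nonneg _)]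
        simp only [Function.uncurry, hFn]
        refine (gauss_bd (c := 2 * t * Real.cosh u) (by positivity)).trans (le_of_eq ?_)
        rw [mul_assoc 2 (√_) _, ← Real.sqrt_inv, ← Real.sqrt_mul (by positivity)]
        congr 2
        field_simp
  have hsw := integral_integral_swap hint
  have h1 : ∫ α in Ioc (0:ℝ) π, ∫ u, F α u = ∫ α in Ioc (0:ℝ) π, ((2 * K0 (2 * t * Real.sin α) : ℝ) : ℂ) := by
    rw [integral_Ioc_eq_integral_Ioo, integral_Ioc_eq_integral_Ioo]
    refine setIntegral_congr_fun measurableSet_Ioo fun α hα => ?_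
    have hs := Real.sin_pos_of_pos_of_lt_pi hα.1 hα.2
    exact (ff_line (r := 2 * t * Real.sin α) (by positivity) hα.1 hα.2).2
  have h2 : ∀ u : ℝ, ∫ α in Ioc (0:ℝ) π, F α u = ((Real.exp (-(t * Real.cosh u)) * (π * I0 t) : ℝ) : ℂ) := by
    intro u
    simp only [hF, ff_trig]
    rw [integral_const_mul, ← intervalIntegral.integral_of_le hpp.le, cexp_cos_shift]
    push_cast; ring
  rw [h1] at hsw
  simp only [h2] at hsw
  rw [integral_complex_ofReal, integral_complex_ofReal, Complex.ofReal_inj, integral_const_mul,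
    integral_mul_const, K_full] at hsw
  linarith

lemma SS_fold (x : ℝ) : SS x = 1 / 2 * ∫ φ in Ioc (0:ℝ) π, Real.exp (-(x * Real.sin φ)) := by
  have hpp := Real.pi_pos
  have hc : Continuous fun θ : ℝ => Real.exp (-(x * Real.sin θ)) := by fun_prop
  rw [← intervalIntegral.integral_of_le hpp.le,
    ← intervalIntegral.integral_add_adjacent_intervals (hc.intervalIntegrable 0 (π/2))
      (hc.intervalIntegrable (π/2) π)]
  have h := intervalIntegral.integral_comp_sub_left (a := 0) (b := π/2) (fun θ => Real.exp (-(x * Real.sin θ))) π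
  simp only [Real.sin_pi_sub, sub_zero] at h
  rw [show π - π/2 = π/2 by ring] at h
  rw [← h]
  unfold SS
  ring

lemma WW_bridge (t : ℝ) (ht : 0 < t) :
    WW t = ((t * K0 t ^ 2 : ℝ) : ℂ) + ((π * t * (I0 t * K0 t) : ℝ) : ℂ) * Complex.I := by
  have hpp := Real.pi_pos
  have hM : ∀ v : ℝ, MM (2 * (t:ℂ) * (Real.cosh v : ℂ)) * ((Real.cosh v)⁻¹ : ℝ)
      = ((2 * t * K0 (2 * t * Real.cosh v) : ℝ) : ℂ) + ((2 * t * SS (2 * t * Real.cosh v) : ℝ) : ℂ) * Complex.I := by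
    intro v
    have hv := Real.cosh_pos v
    have hv' : (Real.cosh v : ℂ) ≠ 0 := Complex.ofReal_ne_zero.2 hv.ne'
    have h := MM_real (x := 2 * t * Real.cosh v) (by positivity)
    rw [show 2 * (t:ℂ) * (Real.cosh v : ℂ) = ((2 * t * Real.cosh v : ℝ) : ℂ) by push_cast; ring, h]
    rw [Complex.ofReal_inv, Complex.ofReal_mul (2 * t) (Real.cosh v)]
    generalize (Real.cosh v : ℂ) = c at hv'
    push_cast
    field_simp
  have hi := MMc_int (z := (t:ℂ)) (by simp)
  simp only [hM] at hi
  have hiK : IntegrableOn (fun v => 2 * t * K0 (2 * t * Real.cosh v)) (Ioi 0) := by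
    refine (Integrable.re hi).congr (Eventually.of_forall fun v => ?_)
    simp
  have hiS : IntegrableOn (fun v => 2 * t * SS (2 * t * Real.cosh v)) (Ioi 0) := by
    refine (Integrable.im hi).congr (Eventually.of_forall fun v => ?_)
    simp
  have hS : IntegrableOn (fun v => SS (2 * t * Real.cosh v)) (Ioi 0) := by
    refine (hiS.const_mul (2 * t)⁻¹).congr (Eventually.of_forall fun v => ?_)
    simp only
    field_simp
  set G : ℝ → ℝ → ℝ := fun φ v => Real.exp (-((2 * t * Real.cosh v) * Real.sin φ)) with hG
  have hGc : Continuous (Function.uncurry G) := by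
    simp only [hG, Function.uncurry_def]; fun_prop
  have hGS : ∀ v, ∫ φ in Ioc (0:ℝ) π, G φ v = 2 * SS (2 * t * Real.cosh v) := by
    intro v; rw [SS_fold]; ring
  have hint : Integrable (Function.uncurry G) ((volume.restrict (Ioc (0:ℝ) π)).prod (volume.restrict (Ioi (0:ℝ)))) := by
    rw [integrable_prod_iff' hGc.aestronglyMeasurable]
    constructor
    · refine Eventually.of_forall fun u => ?_
      have : Continuous fun α => Function.uncurry G (α, u) := hGc.comp (by fun_prop)
      exact this.integrableOn_Ioc
    · refine (hS.const_mul 2).congr (Eventually.of_forall fun v => ?_)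
      have : ∀ φ, ‖Function.uncurry G (φ, v)‖ = G φ v := by
        intro φ
        simp only [Function.uncurry, Real.norm_eq_abs]
        exact abs_of_pos (Real.exp_pos _)
      simp only [this, hGS]
  have hsw := integral_integral_swap hint
  simp only [hGS] at hsw
  have hG2 : ∀ φ, ∫ v in Ioi (0:ℝ), G φ v = K0 (2 * t * Real.sin φ) := by
    intro φ
    unfold K0
    congr 1; ext v; simp only [hG]; congr 1; ring
  simp only [hG2] at hsw
  rw [K0_sin ht, integral_const_mul] at hsw
  have hKsq := K0_sq ht
  unfold WW
  simp only [hM]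
  rw [integral_add hiK.ofReal (hiS.ofReal.mul_const _), integral_mul_const, integral_complex_ofReal,
    integral_complex_ofReal, integral_const_mul, integral_const_mul]
  congr 2
  · rw [hKsq]; ring_nf
  · congr 1
    linear_combination (-t) * hsw


theorem IKM155_alternative :
    (∫ t in Ioi (0:ℝ), I0 t * (K0 t)^5 * t^5)
    = (π^2/3) * ∫ t in Ioi (0:ℝ),
        I0 t * K0 t * ((I0 t)^2 * (K0 t)^2 - 1/(4*t^2) - 1/(16*t^4)) * t^5 := by
  
  exact main_of_bridge WW_bridge
end
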